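/- arXiv:1801.06949 — 6 statements merged into one kernel-verified Lean document; each statement's English description precedes it below -/
import Mathlib

section
/- Let X = {0,1}^ℕ be the Cantor space. For every clopen subset V of X with V ≠ ∅ and V ≠ X, there exists a homeomorphism φ of X such that φ(V) = X \ V. -/
/-!
A clopen subset `V` of a Cantor cube `2^ι` with `ι` infinite depends on a finite set `I` of
coordinates, so it is a product `S × 2^(ι \ I)` with `S` finite. Here `2^(ι \ I)` is a copy of
`2^ι`, and since two copies of `2^ι` form another one, so do the `|S|` copies making up `V`,
unless `V` is empty. Hence two proper nonempty clopen sets are homeomorphic, and so are their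
complements; gluing the two homeomorphisms carries one set onto the other.
-/

open Set Topology

section Gluing

variable {X Y : Type*} [TopologicalSpace X] [TopologicalSpace Y]

open scoped Classical in
/-- A topological space as the disjoint sum of a clopen subset and its complement. -/
noncomputable def sumComplHomeomorph {V : Set X} (hV : IsClopen V) : V ⊕ ↥Vᶜ ≃ₜ X :=
  (Equiv.Set.sumCompl V).toHomeomorphOfContinuousOpen
    (continuous_sum_dom.2 ⟨continuous_subtype_val, continuous_subtype_val⟩)
    (isOpenMap_sum.2 ⟨hV.isOpen.isOpenMap_subtype_val, hV.compl.isOpen.isOpenMap_subtype_val⟩)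

lemma sumComplHomeomorph_symm_apply_coe {V : Set X} (hV : IsClopen V) (x : V) :
    (sumComplHomeomorph hV).symm x = Sum.inl x :=
  (sumComplHomeomorph hV).symm_apply_apply (Sum.inl x)

lemma exists_homeomorph_image_eq_of_isClopen {U : Set X} {V : Set Y} (hU : IsClopen U)
    (hV : IsClopen V) (e : U ≃ₜ V) (e' : ↥Uᶜ ≃ₜ ↥Vᶜ) : ∃ φ : X ≃ₜ Y, φ '' U = V := by
  let φ : X ≃ₜ Y :=
    (sumComplHomeomorph hU).symm.trans ((e.sumCongr e').trans (sumComplHomeomorph hV))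
  have φ_coe (x : U) : φ x = e x :=
    congrArg (sumComplHomeomorph hV ∘ e.sumCongr e') (sumComplHomeomorph_symm_apply_coe hU x)
  refine ⟨φ, ?_⟩
  calc φ '' U
      = range fun x : U => φ x := image_eq_range φ U
    _ = range ((↑) ∘ e : U → Y) := congrArg range (funext φ_coe)
    _ = V := by rw [e.surjective.range_comp, Subtype.range_coe]

end Gluing

section Products

variable {ι : Type*} {X : ι → Type*} {V : Set (∀ i, X i)}

lemma mem_iff_domRestrict_mem_image {s : Set ι} (hV : DependsOn (· ∈ V) s) (x : ∀ i, X i) :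
    x ∈ V ↔ s.domRestrict x ∈ s.domRestrict '' V := by
  refine ⟨mem_image_of_mem _, ?_⟩
  rintro ⟨y, hy, hyx⟩
  exact (hV fun i hi => congrFun hyx ⟨i, hi⟩).mp hy

variable [∀ i, TopologicalSpace (X i)]

lemma exists_finset_dependsOn_mem (hVo : IsOpen V) (hVc : IsCompact V) :
    ∃ I : Finset ι, DependsOn (· ∈ V) (I : Set ι) := by
  classical
  suffices ∃ I : Finset ι, ∀ x ∈ V, ∀ y, (∀ i ∈ I, x i = y i) → y ∈ V by
    obtain ⟨I, hI⟩ := this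
    exact ⟨I, fun x y hxy => propext
      ⟨fun hx => hI x hx y hxy, fun hy => hI y hy x fun i hi => (hxy i hi).symm⟩⟩
  refine hVc.induction_on (p := fun T => ∃ I : Finset ι, ∀ x ∈ T, ∀ y,
    (∀ i ∈ I, x i = y i) → y ∈ V) ⟨∅, by simp⟩ ?mono ?union ?nhds
  case mono =>
    rintro S T hST ⟨I, hI⟩
    exact ⟨I, fun x hx => hI x (hST hx)⟩
  case union =>
    rintro S T ⟨I, hI⟩ ⟨J, hJ⟩
    refine ⟨I ∪ J, ?_⟩
    rintro x (hx | hx) y hxy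
    · exact hI x hx y fun i hi => hxy i (Finset.mem_union_left J hi)
    · exact hJ x hx y fun i hi => hxy i (Finset.mem_union_right I hi)
  case nhds =>
    intro x hx
    obtain ⟨I, u, hu, hIV⟩ := isOpen_pi_iff.1 hVo x hx
    have hbox : (I : Set ι).pi u ∈ 𝓝 x :=
      set_pi_mem_nhds I.finite_toSet fun i hi => (hu i hi).1.mem_nhds (hu i hi).2
    exact ⟨_, mem_nhdsWithin_of_mem_nhds hbox, I,
      fun y hy z hyz => hIV fun i hi => hyz i hi ▸ hy i hi⟩

open scoped Classical in
/-- A subset of a product space depending on the coordinates in `s`, as the product of its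
projection to these coordinates and of all the factors outside `s`. -/
noncomputable def homeomorphProdOfDependsOn {s : Set ι} (hV : DependsOn (· ∈ V) s) :
    V ≃ₜ (s.domRestrict '' V) × (∀ i : ↥sᶜ, X i) :=
  ((Homeomorph.piEquivPiSubtypeProd (· ∈ s) X).subtype
      (q := (· ∈ (s.domRestrict '' V) ×ˢ univ))
      fun x => (mem_iff_domRestrict_mem_image hV x).trans (and_iff_left trivial).symm).trans
    ((Homeomorph.Set.prod _ _).trans
      ((Homeomorph.refl _).prodCongr (Homeomorph.Set.univ _)))

end Products

section FiniteCopies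

/-- Two disjoint copies of a space, labelled by the discrete space `Bool`. -/
def sumSelfHomeomorphBoolProd (X : Type*) [TopologicalSpace X] : X ⊕ X ≃ₜ Bool × X :=
  ((Homeomorph.punitProd X).symm.sumCongr (Homeomorph.punitProd X).symm).trans <|
    Homeomorph.sumProdDistrib.symm.trans <|
      (Homeomorph.ofDiscrete Equiv.boolEquivPUnitSumPUnit.{0, 0}.symm).prodCongr
        (Homeomorph.refl X)

variable {X : Type*} [TopologicalSpace X]

lemma nonempty_fin_prod_homeomorph (h : X ⊕ X ≃ₜ X) (n : ℕ) :
    Nonempty (Fin (n + 1) × X ≃ₜ X) := by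
  induction n with
  | zero => exact ⟨Homeomorph.uniqueProd (Fin 1) X⟩
  | succ n ih =>
    obtain ⟨e⟩ := ih
    let split : Fin (n + 1 + 1) × X ≃ₜ (Fin (n + 1) ⊕ Fin 1) × X :=
      (Homeomorph.ofDiscrete finSumFinEquiv.symm).prodCongr (Homeomorph.refl X)
    exact ⟨split.trans <| Homeomorph.sumProdDistrib.trans <|
      (e.sumCongr (Homeomorph.uniqueProd (Fin 1) X)).trans h⟩

lemma nonempty_finite_prod_homeomorph (h : X ⊕ X ≃ₜ X) (F : Type*) [TopologicalSpace F]
    [DiscreteTopology F] [Finite F] [Nonempty F] : Nonempty (F × X ≃ₜ X) := by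
  obtain ⟨n, hn⟩ := Nat.exists_eq_succ_of_ne_zero (Nat.card_pos (α := F)).ne'
  obtain ⟨e⟩ := nonempty_fin_prod_homeomorph h n
  exact ⟨((Homeomorph.ofDiscrete (Finite.equivFinOfCardEq hn)).prodCongr
    (Homeomorph.refl X)).trans e⟩

end FiniteCopies

section CantorCube

variable {ι : Type*} [Infinite ι]

lemma nonempty_compl_arrow_homeomorph {s : Set ι} (hs : s.Finite) (X : Type*)
    [TopologicalSpace X] : Nonempty ((↥sᶜ → X) ≃ₜ (ι → X)) := by
  have card_lt : Cardinal.mk s < Cardinal.mk ι := hs.lt_aleph0.trans_le (Cardinal.aleph0_le_mk ι)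
  obtain ⟨e⟩ := Cardinal.eq.1 (Cardinal.mk_compl_of_infinite s card_lt)
  exact ⟨Homeomorph.piCongrLeft (Y := fun _ => X) e⟩

lemma nonempty_cantorCube_sum_homeomorph :
    Nonempty ((ι → Bool) ⊕ (ι → Bool) ≃ₜ (ι → Bool)) := by
  classical
  obtain ⟨i⟩ : Nonempty ι := inferInstance
  obtain ⟨tail⟩ := nonempty_compl_arrow_homeomorph (finite_singleton i) Bool
  exact ⟨(sumSelfHomeomorphBoolProd _).trans <| ((Homeomorph.refl Bool).prodCongr tail.symm).trans
    (Homeomorph.funSplitAt Bool i).symm⟩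

lemma nonempty_homeomorph_cantorCube {V : Set (ι → Bool)} (hV : IsClopen V) (hne : V.Nonempty) :
    Nonempty (V ≃ₜ (ι → Bool)) := by
  obtain ⟨I, hI⟩ := exists_finset_dependsOn_mem hV.isOpen hV.isClosed.isCompact
  obtain ⟨tail⟩ := nonempty_compl_arrow_homeomorph I.finite_toSet Bool
  obtain ⟨double⟩ := nonempty_cantorCube_sum_homeomorph (ι := ι)
  have : Nonempty ((I : Set ι).domRestrict '' V) := (hne.image _).to_subtype
  obtain ⟨absorb⟩ := nonempty_finite_prod_homeomorph double ((I : Set ι).domRestrict '' V)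
  exact ⟨(homeomorphProdOfDependsOn hI).trans <|
    ((Homeomorph.refl _).prodCongr tail).trans absorb⟩

theorem cantor_clopen_swap_general {U V : Set (ι → Bool)} (hU : IsClopen U) (hV : IsClopen V)
    (hUne : U.Nonempty) (hVne : V.Nonempty) (hUproper : U ≠ univ) (hVproper : V ≠ univ) :
    ∃ φ : (ι → Bool) ≃ₜ (ι → Bool), φ '' U = V := by
  obtain ⟨eU⟩ := nonempty_homeomorph_cantorCube hU hUne
  obtain ⟨eV⟩ := nonempty_homeomorph_cantorCube hV hVne
  obtain ⟨eU'⟩ := nonempty_homeomorph_cantorCube hU.compl (nonempty_compl.2 hUproper)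
  obtain ⟨eV'⟩ := nonempty_homeomorph_cantorCube hV.compl (nonempty_compl.2 hVproper)
  exact exists_homeomorph_image_eq_of_isClopen hU hV (eU.trans eV.symm) (eU'.trans eV'.symm)

end CantorCube

/-- for every clopen set `V` in the Cantor space `X = {0,1}^ℕ` with
`V ≠ ∅` and `V ≠ X`, there is a homeomorphism `φ` of `X` with `φ(V) = X \ V`. -/
theorem cantor_clopen_swap (V : Set (ℕ → Bool)) (hV : IsClopen V)
    (hne : V.Nonempty) (hproper : V ≠ Set.univ) :
    ∃ φ : (ℕ → Bool) ≃ₜ (ℕ → Bool), φ '' V = Vᶜ :=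
  cantor_clopen_swap_general hV hV.compl hne (nonempty_compl.2 hproper) hproper
    (compl_ne_univ.2 hne)
end

section
/- Let X = {0,1}^ℕ be the Cantor space, let Γ be the free group on the disjoint union S ⊔ T of two disjoint countably infinite sets S and T, and let Γ_S be the subgroup of Γ generated by S. For every nonempty clopen subset V of X, the set of actions {α ∈ 𝒮 : ⋃_{γ ∈ Γ_S} α(γ)(V) = X} (i.e., the Γ_S-saturation of V fulfills X) is an open subset of 𝒮 = Hom(Γ, Homeo(X)). -/
/-- The Cantor space `{0,1}^ℕ`, with its product topology. -/
abbrev CantorSp : Type := ℕ → Bool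

/-- The topology of uniform convergence on the homeomorphism group of the Cantor space. -/
instance cantorHomeoTopology : TopologicalSpace (CantorSp ≃ₜ CantorSp) :=
  TopologicalSpace.induced
    (fun φ => ((φ : C(CantorSp, CantorSp)), (φ.symm : C(CantorSp, CantorSp))))
    inferInstance

/-!
A point `x` lies in the `Γ_S`-saturation of `V` under `α` iff `α(γ)⁻¹ x ∈ V` for some `γ ∈ Γ_S`.
Uniform convergence makes `(α, x) ↦ α(γ)⁻¹ x` jointly continuous, so the pairs `(α, x)` with `x` in
the saturation form an open subset of `𝒮 × X`. As `X` is compact, the projection to `𝒮` is closed,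
hence the set of `α` whose whole fiber lies in this open set is open.
-/

theorem isOpen_setOf_forall_mk_mem {Y Z : Type*} [TopologicalSpace Y] [TopologicalSpace Z]
    [CompactSpace Z] {U : Set (Y × Z)} (hU : IsOpen U) : IsOpen {y | ∀ z, (y, z) ∈ U} := by
  have hker : {y | ∀ z, (y, z) ∈ U} = Set.kernImage Prod.fst U := by
    ext y
    simp [Set.kernImage, forall_comm (α := Y)]
  exact hker ▸ isClosedMap_iff_kernImage.mp isClosedMap_fst_of_compactSpace hU

theorem biUnion_image_equiv_eq_univ_iff {ι X Z : Type*} {e : ι → X ≃ Z} {A : Set ι} {V : Set X} :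
    ⋃ i ∈ A, e i '' V = Set.univ ↔ ∀ z, ∃ i ∈ A, (e i).symm z ∈ V := by
  simp only [Set.eq_univ_iff_forall, Set.mem_iUnion, Set.mem_image_equiv, exists_prop]

theorem continuous_symm_apply {Y : Type*} [TopologicalSpace Y] {φ : Y → CantorSp ≃ₜ CantorSp}
    {f : Y → CantorSp} (hφ : Continuous φ) (hf : Continuous f) :
    Continuous fun y => (φ y).symm (f y) := by
  have hpair : Continuous fun ψ : CantorSp ≃ₜ CantorSp =>
      ((ψ : C(CantorSp, CantorSp)), (ψ.symm : C(CantorSp, CantorSp))) := continuous_induced_dom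
  exact (hpair.snd.comp hφ).eval hf

theorem saturation_property_open_general {ι X Y Z : Type*} [TopologicalSpace X]
    [TopologicalSpace Y] [TopologicalSpace Z] [CompactSpace Z] {φ : ι → Y → X ≃ Z} {A : Set ι}
    (hφ : ∀ i ∈ A, Continuous fun p : Y × Z => (φ i p.1).symm p.2) {V : Set X} (hV : IsOpen V) :
    IsOpen {y | ⋃ i ∈ A, φ i y '' V = Set.univ} := by
  have hU : IsOpen (⋃ i ∈ A, (fun p : Y × Z => (φ i p.1).symm p.2) ⁻¹' V) :=
    isOpen_biUnion fun i hi => hV.preimage (hφ i hi)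
  simpa [biUnion_image_equiv_eq_univ_iff] using isOpen_setOf_forall_mk_mem hU

/-- Let `Γ` be the free group on the disjoint union `S ⊔ T` of two disjoint
countably infinite sets, and `Γ_S ≤ Γ` the subgroup generated by `S`.  For every nonempty
clopen `V ⊆ X`, the set of actions `α ∈ 𝒮 = Hom(Γ, Homeo(X))` whose `Γ_S`-saturation of
`V` fulfills `X` is open in `𝒮`. -/
theorem saturation_property_open
    (S T : Type) [Countable S] [Infinite S] [Countable T] [Infinite T]
    (V : Set CantorSp) (hV : IsClopen V) (hne : V.Nonempty) :
    IsOpen {α : {α : FreeGroup (S ⊕ T) → (CantorSp ≃ₜ CantorSp) //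
        ∀ γ γ', α (γ * γ') = (α γ').trans (α γ)} |
      (⋃ γ ∈ Subgroup.closure (Set.range fun s : S => FreeGroup.of (Sum.inl s)),
        (α.1 γ) '' V) = Set.univ} :=
  (saturation_property_open_general
    (φ := fun γ (α : FreeGroup (S ⊕ T) → CantorSp ≃ₜ CantorSp) => (α γ).toEquiv)
    (fun _ _ => continuous_symm_apply (by fun_prop) continuous_snd) hV.isOpen).preimage
      continuous_subtype_val
end

section
/- Let X = {0,1}^ℕ be the Cantor space, let Γ be the free group on the disjoint union S ⊔ T of two disjoint countably infinite sets S and T, and let Γ_S be the subgroup of Γ generated by S. For every clopen subset V of X with V ≠ ∅ and V ≠ X, the set of actions {α ∈ 𝒮 : ⋃_{γ ∈ Γ_S} α(γ)(V) = X} is dense in 𝒮 = Hom(Γ, Homeo(X)). -/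
/-!
A basic neighbourhood of an action constrains only finitely many group elements, hence only
finitely many free generators. Infinitely many generators in `S` remain free, and they can be made
to act by all the homeomorphisms switching finitely many coordinates. These carry any cylinder onto
every cylinder with the same support, so `Γ_S` then acts minimally, whatever the topology on
`Homeo(X)`.
-/

theorem dense_of_forall_exists_eqOn_finset {ι : Type*} {Y : ι → Type*}
    [∀ i, TopologicalSpace (Y i)] {p : (∀ i, Y i) → Prop} {D : Set (Subtype p)}
    (h : ∀ (x : Subtype p) (I : Finset ι), ∃ y ∈ D, ∀ i ∈ I, y.1 i = x.1 i) : Dense D := by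
  refine fun x => mem_closure_iff.2 fun U hU hxU => ?_
  obtain ⟨W, hW, rfl⟩ := isOpen_induced_iff.1 hU
  obtain ⟨I, u, hu, hIu⟩ := isOpen_pi_iff.1 hW x.1 hxU
  obtain ⟨y, hyD, hyx⟩ := h x I
  refine ⟨y, hIu fun i hi => ?_, hyD⟩
  rw [hyx i hi]
  exact (hu i hi).2

theorem exists_eqOn_compl_and_subset_image {A G : Type*} {B : Set A} (hB : B.Infinite) {K : Set G}
    (hK : K.Countable) (f : A → G) : ∃ g : A → G, Set.EqOn g f Bᶜ ∧ K ⊆ g '' B := by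
  have := hK.to_subtype
  obtain ⟨n, hn⟩ := exists_injective_nat K
  let e : K → A := fun k => hB.natEmbedding B (n k)
  have he : e.Injective :=
    Subtype.val_injective.comp ((hB.natEmbedding B).injective.comp hn)
  have heB (k : K) : e k ∈ B := (hB.natEmbedding B (n k)).2
  refine ⟨Function.extend e Subtype.val f, fun a ha => ?_, fun k hk => ?_⟩
  · refine Function.extend_apply' _ _ _ ?_
    rintro ⟨k, rfl⟩
    exact ha (heB k)
  · exact ⟨e ⟨k, hk⟩, heB _, he.extend_apply _ _ _⟩

section Generators

variable {A G : Type*}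

theorem exists_finite_mem_closure_image_of (γ : FreeGroup A) :
    ∃ F : Set A, F.Finite ∧ γ ∈ Subgroup.closure (FreeGroup.of '' F) := by
  induction γ using FreeGroup.induction_on with
  | C1 => exact ⟨∅, Set.finite_empty, one_mem _⟩
  | of a => exact ⟨{a}, Set.finite_singleton a, Subgroup.subset_closure ⟨a, rfl, rfl⟩⟩
  | inv_of a ih => exact ih.imp fun F hF => ⟨hF.1, inv_mem hF.2⟩
  | mul γ δ ihγ ihδ =>
    obtain ⟨E, hE, hγ⟩ := ihγ
    obtain ⟨F, hF, hδ⟩ := ihδ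
    exact ⟨E ∪ F, hE.union hF, mul_mem
      (Subgroup.closure_mono (Set.image_mono Set.subset_union_left) hγ)
      (Subgroup.closure_mono (Set.image_mono Set.subset_union_right) hδ)⟩

theorem exists_finite_subset_closure_image_of {I : Set (FreeGroup A)} (hI : I.Finite) :
    ∃ F : Set A, F.Finite ∧ I ⊆ Subgroup.closure (FreeGroup.of '' F) := by
  choose F hF hmem using exists_finite_mem_closure_image_of (A := A)
  exact ⟨⋃ γ ∈ I, F γ, hI.biUnion fun γ _ => hF γ, fun γ hγ =>
    Subgroup.closure_mono (Set.image_mono (Set.subset_biUnion_of_mem hγ)) (hmem γ)⟩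

theorem exists_hom_eqOn_and_subset_image_of [Group G] {B : Set A} (hB : B.Infinite) {K : Set G}
    (hK : K.Countable) (φ : FreeGroup A →* G) {I : Set (FreeGroup A)} (hI : I.Finite) :
    ∃ ψ : FreeGroup A →* G, Set.EqOn ψ φ I ∧ K ⊆ (fun a => ψ (FreeGroup.of a)) '' B := by
  obtain ⟨F, hF, hIF⟩ := exists_finite_subset_closure_image_of hI
  obtain ⟨g, hgφ, hKg⟩ :=
    exists_eqOn_compl_and_subset_image (hB.sdiff hF) hK (fun a => φ (FreeGroup.of a))
  refine ⟨FreeGroup.lift g, Set.EqOn.mono hIF (MonoidHom.eqOn_closure ?_), ?_⟩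
  · rintro _ ⟨a, ha, rfl⟩
    exact (FreeGroup.lift_apply_of).trans (hgφ fun h => h.2 ha)
  · simpa only [FreeGroup.lift_apply_of] using hKg.trans (Set.image_mono Set.sdiff_subset)

theorem dense_setOf_subset_image_of [Group G] [TopologicalSpace G] {B : Set A} (hB : B.Infinite)
    {K : Set G} (hK : K.Countable) :
    Dense {φ : {φ : FreeGroup A → G // ∀ γ δ, φ (γ * δ) = φ γ * φ δ} |
      K ⊆ (fun a => φ.1 (FreeGroup.of a)) '' B} := by
  refine dense_of_forall_exists_eqOn_finset fun φ I => ?_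
  obtain ⟨ψ, hψφ, hKψ⟩ :=
    exists_hom_eqOn_and_subset_image_of hB hK (MonoidHom.mk' φ.1 φ.2) I.finite_toSet
  exact ⟨⟨ψ, map_mul ψ⟩, hKψ, hψφ⟩

end Generators

section Flip

variable {ι : Type*} [DecidableEq ι]

/-- The involutive homeomorphism of `{0,1}^ι` switching the coordinates in the finite set `c`. -/
def flipOn (c : Finset ι) : (ι → Bool) ≃ₜ (ι → Bool) :=
  Homeomorph.piCongrRight fun i =>
    (if i ∈ c then Equiv.boolNot else Equiv.refl Bool).toHomeomorphOfDiscrete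

theorem flipOn_apply (c : Finset ι) (x : ι → Bool) (i : ι) :
    flipOn c x i = if i ∈ c then !x i else x i := by
  by_cases hi : i ∈ c <;> simp [flipOn, hi, Equiv.toHomeomorphOfDiscrete]

theorem flipOn_flipOn (c : Finset ι) (x : ι → Bool) : flipOn c (flipOn c x) = x := by
  ext i
  by_cases hi : i ∈ c <;> simp [flipOn_apply, hi]

theorem flipOn_filter_ne_eqOn (I : Finset ι) (x v : ι → Bool) :
    Set.EqOn (flipOn (I.filter fun i => x i ≠ v i) x) v I := by
  intro i hi
  by_cases hxv : x i = v i
  · simp [flipOn_apply, hxv]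
  · simpa [flipOn_apply, hxv, Finset.mem_coe.1 hi] using Bool.not_eq.2 hxv

theorem exists_mem_flipOn_image {V : Set (ι → Bool)} (hV : IsOpen V) (hne : V.Nonempty)
    (x : ι → Bool) : ∃ c, x ∈ flipOn c '' V := by
  obtain ⟨v, hv⟩ := hne
  obtain ⟨I, u, hu, hIu⟩ := isOpen_pi_iff.1 hV v hv
  refine ⟨I.filter fun i => x i ≠ v i, _, hIu fun i hi => ?_, flipOn_flipOn _ x⟩
  rw [flipOn_filter_ne_eqOn I x v hi]
  exact (hu i hi).2

end Flip

theorem saturation_property_dense_general (S T : Type*) [Infinite S] :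
    Dense {α : {α : FreeGroup (S ⊕ T) → (CantorSp ≃ₜ CantorSp) //
        ∀ γ γ', α (γ * γ') = (α γ').trans (α γ)} |
      ∀ V : Set CantorSp, IsOpen V → V.Nonempty →
        (⋃ γ ∈ Subgroup.closure (Set.range fun s : S => FreeGroup.of (Sum.inl s)),
          (α.1 γ) '' V) = Set.univ} := by
  have hS : (Set.range (Sum.inl : S → S ⊕ T)).Infinite :=
    Set.infinite_range_of_injective Sum.inl_injective
  have hflips : (Set.range (flipOn : Finset ℕ → (CantorSp ≃ₜ CantorSp))).Countable :=
    Set.countable_range _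
  -- Multiplication in the group `X ≃ₜ X` unfolds to `φ * ψ = ψ.trans φ`.
  refine (dense_setOf_subset_image_of hS hflips).mono fun α hα V hV hne => ?_
  refine Set.eq_univ_of_forall fun x => ?_
  obtain ⟨c, hc⟩ := exists_mem_flipOn_image hV hne x
  obtain ⟨_, ⟨s, rfl⟩, (hs : α.1 (FreeGroup.of (Sum.inl s)) = flipOn c)⟩ :=
    hα (Set.mem_range_self c)
  refine Set.mem_iUnion₂.2 ⟨_, Subgroup.subset_closure (Set.mem_range_self s), ?_⟩
  rwa [hs]

/-- Let `Γ` be the free group on the disjoint union `S ⊔ T` of two disjoint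
countably infinite sets, and `Γ_S ≤ Γ` the subgroup generated by `S`.  For every clopen
`V ⊆ X` with `V ≠ ∅` and `V ≠ X`, the set of actions `α ∈ 𝒮 = Hom(Γ, Homeo(X))` whose
`Γ_S`-saturation of `V` fulfills `X` is dense in `𝒮`. -/
theorem saturation_property_dense
    (S T : Type) [Countable S] [Infinite S] [Countable T] [Infinite T]
    (V : Set CantorSp) (hV : IsClopen V) (hne : V.Nonempty) (hproper : V ≠ Set.univ) :
    Dense {α : {α : FreeGroup (S ⊕ T) → (CantorSp ≃ₜ CantorSp) //
        ∀ γ γ', α (γ * γ') = (α γ').trans (α γ)} |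
      (⋃ γ ∈ Subgroup.closure (Set.range fun s : S => FreeGroup.of (Sum.inl s)),
        (α.1 γ) '' V) = Set.univ} := by
  refine (saturation_property_dense_general S T).mono fun α hα => ?_
  exact hα V hV.isOpen hne
end

section
/- Let X = {0,1}^ℕ be the Cantor space, let Γ be the free group on the disjoint union S ⊔ T of two disjoint countably infinite sets S and T, and let Γ_S be the subgroup of Γ generated by S. The set of actions {α ∈ 𝒮 : the restriction of α to Γ_S is minimal} is a dense G_δ subset of 𝒮 = Hom(Γ, Homeo(X)), i.e., it contains/equals a countable intersection of open sets and is dense in 𝒮. -/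
/-!
**`G_δ`.** For an open set `U`, the actions for which every point of `X` is moved into `U` by some
element of `Γ_S` form an open set, because evaluation is jointly continuous and `X` is compact.
Minimality is the conjunction of these conditions over a countable basis of `X`.

**Density.** A neighbourhood of an action constrains only finitely many generators, so the
remaining generators in `S` may be made to act by any prescribed sequence of homeomorphisms.
Prescribe the translations of the group `(ℤ/2)^ℕ = X` by the terms of a dense sequence: the
translates of any point are then already dense.
-/

open Filter TopologicalSpace

section Minimality

theorem isOpen_setOfPred_forall_exists_apply_mem {Γ F X Y : Type*} [FunLike F X Y]
    [TopologicalSpace F] [TopologicalSpace X] [CompactSpace X] [TopologicalSpace Y]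
    [ContinuousEval F X Y] (H : Set Γ) {U : Set Y} (hU : IsOpen U) :
    IsOpen {α : Γ → F | ∀ x, ∃ γ ∈ H, α γ x ∈ U} := by
  have isOpen_pairs : IsOpen {p : (Γ → F) × X | ∃ γ ∈ H, p.1 γ p.2 ∈ U} := by
    simp only [← exists_prop, Set.ofPred_exists]
    exact isOpen_biUnion fun γ _ => hU.preimage <|
      ((continuous_apply γ).comp continuous_fst).eval continuous_snd
  rw [← isClosed_compl_iff]
  convert isClosedMap_fst_of_compactSpace _ isOpen_pairs.isClosed_compl using 1
  ext α
  simp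

variable {Γ F X : Type*} [FunLike F X X] [TopologicalSpace X]

/-- The family of self-maps `α γ`, `γ ∈ H`, is minimal: every point has dense image under it. For an
action `α` and a subgroup `H` this is minimality of the restriction of `α` to `H`. -/
def IsMinimalOn (α : Γ → F) (H : Set Γ) : Prop :=
  ∀ x, Dense {y | ∃ γ ∈ H, α γ x = y}

theorem isMinimalOn_iff_forall_mem_countableBasis [SecondCountableTopology X] {α : Γ → F}
    {H : Set Γ} : IsMinimalOn α H ↔ ∀ U ∈ countableBasis X, ∀ x, ∃ γ ∈ H, α γ x ∈ U := by
  simp only [IsMinimalOn, (isBasis_countableBasis X).dense_iff]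
  constructor
  · intro hα U hU x
    obtain ⟨_, hyU, γ, hγ, rfl⟩ := hα x U hU (nonempty_of_mem_countableBasis hU)
    exact ⟨γ, hγ, hyU⟩
  · intro hα x U hU _
    obtain ⟨γ, hγ, hγU⟩ := hα U hU x
    exact ⟨_, hγU, γ, hγ, rfl⟩

theorem isGδ_setOfPred_isMinimalOn [CompactSpace X] [SecondCountableTopology X] [TopologicalSpace F]
    [ContinuousEval F X X] (H : Set Γ) : IsGδ {α : Γ → F | IsMinimalOn α H} := by
  simp only [isMinimalOn_iff_forall_mem_countableBasis, Set.ofPred_forall]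
  refine IsGδ.biInter_of_isOpen (countable_countableBasis X) fun U hU => ?_
  simpa only [Set.ofPred_forall] using
    isOpen_setOfPred_forall_exists_apply_mem H (isOpen_of_mem_countableBasis hU)

end Minimality

section HomSpace

/-- The space `Hom(Γ, G)` of group homomorphisms with the topology of pointwise convergence, encoded
as a subspace of the product `Γ → G`. -/
abbrev HomSpace (Γ G : Type*) [Mul Γ] [Mul G] : Type _ :=
  {f : Γ → G // ∀ γ γ', f (γ * γ') = f γ * f γ'}

theorem eventually_extend_add_apply_eq {ι G : Type*} {s : ℕ → ι} (hs : s.Injective) (φ : ℕ → G)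
    (f : ι → G) (i : ι) : ∀ᶠ N in atTop, Function.extend (fun n => s (N + n)) φ f i = f i := by
  have eventually_notMem : ∀ᶠ N in atTop, ¬∃ n, s (N + n) = i := by
    by_cases hi : ∃ m, s m = i
    · obtain ⟨m, rfl⟩ := hi
      filter_upwards [eventually_gt_atTop m] with N hN ⟨n, hn⟩
      have := hs hn
      omega
    · exact .of_forall fun N ⟨n, hn⟩ => hi ⟨N + n, hn⟩
  exact eventually_notMem.mono fun N hN => Function.extend_apply' _ _ _ hN

variable {ι G : Type*} [Group G]

theorem eventually_freeGroup_hom_eq {κ : Type*} {l : Filter κ} {f : κ → FreeGroup ι →* G}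
    {g : FreeGroup ι →* G} (hfg : ∀ i, ∀ᶠ k in l, f k (.of i) = g (.of i)) (γ : FreeGroup ι) :
    ∀ᶠ k in l, f k γ = g γ := by
  induction γ using FreeGroup.induction_on with
  | C1 => simp only [map_one, eventually_true]
  | of i => exact hfg i
  | inv_of i hi => exact hi.mono fun k hk => by rw [map_inv, map_inv, hk]
  | mul γ γ' hγ hγ' =>
    filter_upwards [hγ, hγ'] with k hk hk'
    rw [map_mul, map_mul, hk, hk']

theorem dense_setOfPred_forall_exists_map_of_eq [TopologicalSpace G] {S : Set ι} (hS : S.Infinite)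
    (φ : ℕ → G) : Dense {f : HomSpace (FreeGroup ι) G | ∀ n, ∃ i ∈ S, f.1 (.of i) = φ n} := by
  intro f
  let s : ℕ → ι := fun n => hS.natEmbedding S n
  have hs : s.Injective := Subtype.val_injective.comp (hS.natEmbedding S).injective
  let g (N : ℕ) : FreeGroup ι →* G :=
    FreeGroup.lift (Function.extend (fun n => s (N + n)) φ fun i => f.1 (.of i))
  have g_eventually_eq : ∀ γ, ∀ᶠ N in atTop, g N γ = f.1 γ :=
    eventually_freeGroup_hom_eq (g := .mk' f.1 f.2) fun i => by
      simpa [g] using eventually_extend_add_apply_eq hs φ (fun i => f.1 (.of i)) i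
  have g_apply (N n : ℕ) : g N (.of (s (N + n))) = φ n := by
    have hsN : (fun n => s (N + n)).Injective := hs.comp (add_right_injective N)
    simpa [g] using hsN.extend_apply φ _ n
  refine mem_closure_of_tendsto (b := atTop) (f := fun N => ⟨g N, map_mul (g N)⟩) ?_
    (.of_forall fun N n => ⟨s (N + n), (hS.natEmbedding S _).2, g_apply N n⟩)
  rw [tendsto_subtype_rng, tendsto_pi_nhds]
  exact fun γ => tendsto_nhds_of_eventually_eq (g_eventually_eq γ)

end HomSpace

section Cantor

instance continuousEval_cantorHomeo : ContinuousEval (CantorSp ≃ₜ CantorSp) CantorSp CantorSp :=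
  .of_continuous_forget (f := fun φ => (φ : C(CantorSp, CantorSp)))
    (continuous_fst.comp (continuous_induced_dom (f := fun φ : CantorSp ≃ₜ CantorSp =>
      ((φ : C(CantorSp, CantorSp)), (φ.symm : C(CantorSp, CantorSp))))))

/-- Translation by `z` in the group `(ℤ/2)^ℕ`, whose underlying space is the Cantor space. -/
def xorHomeomorph (z : CantorSp) : CantorSp ≃ₜ CantorSp where
  toFun x n := z n ^^ x n
  invFun x n := z n ^^ x n
  left_inv x := by simp
  right_inv x := by simp

theorem xorHomeomorph_apply_comm (z x : CantorSp) : xorHomeomorph z x = xorHomeomorph x z :=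
  funext fun n => Bool.xor_comm (z n) (x n)

theorem denseRange_xorHomeomorph_denseSeq_apply (x : CantorSp) :
    DenseRange fun n => xorHomeomorph (denseSeq CantorSp n) x := by
  simp only [xorHomeomorph_apply_comm _ x]
  exact (xorHomeomorph x).surjective.denseRange.comp (denseRange_denseSeq CantorSp)
    (xorHomeomorph x).continuous

end Cantor

theorem minimal_restriction_dense_Gdelta_general {ι X : Type*} [TopologicalSpace X] [CompactSpace X]
    [SecondCountableTopology X] [TopologicalSpace (X ≃ₜ X)] [ContinuousEval (X ≃ₜ X) X X]
    {S : Set ι} (hS : S.Infinite) {φ : ℕ → X ≃ₜ X} (hφ : ∀ x, DenseRange fun n => φ n x) :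
    IsGδ {α : HomSpace (FreeGroup ι) (X ≃ₜ X) |
      IsMinimalOn α.1 (Subgroup.closure (FreeGroup.of '' S) : Set (FreeGroup ι))} ∧
    Dense {α : HomSpace (FreeGroup ι) (X ≃ₜ X) |
      IsMinimalOn α.1 (Subgroup.closure (FreeGroup.of '' S) : Set (FreeGroup ι))} := by
  refine ⟨(isGδ_setOfPred_isMinimalOn _).preimage continuous_subtype_val,
    (dense_setOfPred_forall_exists_map_of_eq hS φ).mono fun α hα x => (hφ x).mono ?_⟩
  rintro _ ⟨n, rfl⟩
  obtain ⟨i, hi, hαi⟩ := hα n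
  exact ⟨.of i, Subgroup.subset_closure ⟨i, hi, rfl⟩, by rw [hαi]⟩

/-- Let `Γ` be the free group on the disjoint union `S ⊔ T` of two disjoint
countably infinite sets, and `Γ_S ≤ Γ` the subgroup generated by `S`.  The set of actions
`α ∈ 𝒮 = Hom(Γ, Homeo(X))` whose restriction to `Γ_S` is minimal (every `Γ_S`-orbit is
dense in `X`) is a dense `G_δ` subset of `𝒮`. -/
theorem minimal_restriction_dense_Gdelta
    (S T : Type) [Countable S] [Infinite S] [Countable T] [Infinite T] :
    IsGδ {α : {α : FreeGroup (S ⊕ T) → (CantorSp ≃ₜ CantorSp) //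
        ∀ γ γ', α (γ * γ') = (α γ').trans (α γ)} |
      ∀ x : CantorSp, Dense {y : CantorSp |
        ∃ γ ∈ Subgroup.closure (Set.range fun s : S => FreeGroup.of (Sum.inl s)),
          (α.1 γ) x = y}} ∧
    Dense {α : {α : FreeGroup (S ⊕ T) → (CantorSp ≃ₜ CantorSp) //
        ∀ γ γ', α (γ * γ') = (α γ').trans (α γ)} |
      ∀ x : CantorSp, Dense {y : CantorSp |
        ∃ γ ∈ Subgroup.closure (Set.range fun s : S => FreeGroup.of (Sum.inl s)),
          (α.1 γ) x = y}} := by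
  simpa only [← Set.range_comp] using! minimal_restriction_dense_Gdelta_general
    (Set.infinite_range_of_injective Sum.inl_injective) denseRange_xorHomeomorph_denseSeq_apply
end

section
/- Let X = {0,1}^ℕ be the Cantor space and let Γ be the free group on the disjoint union S ⊔ T of two disjoint countably infinite sets S and T. The set of free actions {α ∈ 𝒮 : for all γ ∈ Γ with γ ≠ 1 and all x ∈ X, α(γ)(x) ≠ x} is a dense G_δ subset of 𝒮 = Hom(Γ, Homeo(X)). -/
open Filter Topology Uniformity

section HomeomorphismGroups

variable {X Y : Type*} [TopologicalSpace X] [TopologicalSpace Y]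

/-- Conjugation by `e : X ≃ₜ Y`, as a homomorphism of homeomorphism groups; it transports actions
on `X` to actions on `Y`. -/
def homeoConj (e : X ≃ₜ Y) : (X ≃ₜ X) →* (Y ≃ₜ Y) :=
  .mk' (fun φ => (e.symm.trans φ).trans e) fun φ ψ => by ext; simp

@[simp]
theorem homeoConj_apply (e : X ≃ₜ Y) (φ : X ≃ₜ X) (y : Y) :
    homeoConj e φ y = e (φ (e.symm y)) := rfl

theorem homeoConj_apply_ne (e : X ≃ₜ Y) {φ : X ≃ₜ X} (hφ : ∀ x, φ x ≠ x) (y : Y) :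
    homeoConj e φ y ≠ y := fun h =>
  hφ (e.symm y) (e.injective (by simpa using h))

/-- The coordinatewise homeomorphism of `X × Y`, as a homomorphism of homeomorphism groups; it
turns a pair of actions into the diagonal action. -/
def homeoProd : (X ≃ₜ X) × (Y ≃ₜ Y) →* (X × Y ≃ₜ X × Y) :=
  .mk' (fun φ => φ.1.prodCongr φ.2) fun _ _ => rfl

@[simp]
theorem homeoProd_apply (φ : (X ≃ₜ X) × (Y ≃ₜ Y)) (p : X × Y) :
    homeoProd φ p = (φ.1 p.1, φ.2 p.2) := rfl

/-- The coordinatewise homeomorphism of a product of spaces, as a homomorphism of homeomorphism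
groups; it turns a family of actions into the diagonal action. -/
def homeoPi {ι : Type*} {Z : ι → Type*} [∀ i, TopologicalSpace (Z i)] :
    (∀ i, Z i ≃ₜ Z i) →* ((∀ i, Z i) ≃ₜ ∀ i, Z i) :=
  .mk' Homeomorph.piCongrRight fun _ _ => rfl

@[simp]
theorem homeoPi_apply {ι : Type*} {Z : ι → Type*} [∀ i, TopologicalSpace (Z i)]
    (φ : ∀ i, Z i ≃ₜ Z i) (z : ∀ i, Z i) (i : ι) : homeoPi φ z i = φ i (z i) := rfl

/-- Permutations of a discrete space, as homeomorphisms. -/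
def permHomeo (V : Type*) [TopologicalSpace V] [DiscreteTopology V] :
    Equiv.Perm V →* (V ≃ₜ V) :=
  .mk' Equiv.toHomeomorphOfDiscrete fun _ _ => rfl

@[simp]
theorem permHomeo_apply {V : Type*} [TopologicalSpace V] [DiscreteTopology V]
    (σ : Equiv.Perm V) (v : V) : permHomeo V σ v = σ v := rfl

end HomeomorphismGroups

section Coinduction

variable {Γ X : Type*} [Group Γ] [TopologicalSpace X]

/-- The cocycle `Γ × Γ ⧸ H → H` that measures the failure of the section `Quotient.out` of
`Γ → Γ ⧸ H` to be equivariant. -/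
noncomputable def cosetCocycle (H : Subgroup Γ) (g : Γ) (q : Γ ⧸ H) : H :=
  ⟨q.out⁻¹ * (g * (g⁻¹ • q).out), QuotientGroup.eq.1 <| by
    rw [QuotientGroup.out_eq', ← smul_eq_mul, ← MulAction.Quotient.smul_coe,
      QuotientGroup.out_eq', smul_inv_smul]⟩

theorem cosetCocycle_mul (H : Subgroup Γ) (g g' : Γ) (q : Γ ⧸ H) :
    cosetCocycle H (g * g') q = cosetCocycle H g q * cosetCocycle H g' (g⁻¹ • q) := by
  ext
  simp [cosetCocycle, mul_smul, mul_assoc]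

/-- The coinduction of an action of the subgroup `H` on `X` to an action of `Γ`. The usual space of
`H`-equivariant maps `Γ → X` is identified with `Γ ⧸ H → X` by restriction to coset
representatives. -/
noncomputable def homeoCoind {H : Subgroup Γ} (ρ : H →* (X ≃ₜ X)) :
    Γ →* ((Γ ⧸ H → X) ≃ₜ (Γ ⧸ H → X)) :=
  .mk' (fun g => (Homeomorph.piCongrLeft (Y := fun _ => X) (MulAction.toPerm g⁻¹)).symm.trans
      (homeoPi fun q => ρ (cosetCocycle H g q))) fun g g' => by
    ext f q
    simp [cosetCocycle_mul, mul_smul]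

theorem homeoCoind_apply {H : Subgroup Γ} (ρ : H →* (X ≃ₜ X)) (g : Γ) (f : Γ ⧸ H → X)
    (q : Γ ⧸ H) : homeoCoind ρ g f q = ρ (cosetCocycle H g q) (f (g⁻¹ • q)) := rfl

theorem homeoCoind_apply_ne {H : Subgroup Γ} {ρ : H →* (X ≃ₜ X)} {h : H}
    (hρ : ∀ x, ρ h x ≠ x) (f : Γ ⧸ H → X) : homeoCoind ρ h f ≠ f := by
  intro hf
  let q : Γ ⧸ H := (1 : Γ)
  have hq : (h : Γ)⁻¹ • q = q := QuotientGroup.eq.2 (by simp)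
  let k : H := ⟨q.out, by simpa [q] using QuotientGroup.mk_out_eq_mul H 1⟩
  have hk : cosetCocycle H h q = k⁻¹ * h * k := by
    ext
    simp [cosetCocycle, hq, k, mul_assoc]
  have hfix : (ρ k)⁻¹ (ρ h (ρ k (f q))) = f q := by
    simpa [homeoCoind_apply, hq, hk] using congrFun hf q
  exact hρ (ρ k (f q)) ((Homeomorph.symm_apply_eq _).1 hfix)

end Coinduction

section CantorSpace

theorem nonempty_homeomorph_fin_succ_prod {X : Type*} [TopologicalSpace X] (d : X ⊕ X ≃ₜ X)
    (n : ℕ) : Nonempty (Fin (n + 1) × X ≃ₜ X) := by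
  induction n with
  | zero => exact ⟨.uniqueProd (Fin 1) X⟩
  | succ n ih =>
    obtain ⟨e⟩ := ih
    let split : Fin (n + 1 + 1) ≃ₜ Fin (n + 1) ⊕ Fin 1 :=
      finSumFinEquiv.symm.toHomeomorphOfDiscrete
    exact ⟨(split.prodCongr (.refl X)).trans <| Homeomorph.sumProdDistrib.trans <|
      (e.sumCongr (.uniqueProd (Fin 1) X)).trans d⟩

theorem nonempty_homeomorph_finite_prod {V X : Type*} [Finite V] [Nonempty V] [TopologicalSpace V]
    [DiscreteTopology V] [TopologicalSpace X] (d : X ⊕ X ≃ₜ X) : Nonempty (V × X ≃ₜ X) := by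
  obtain ⟨n, ⟨e⟩⟩ := Finite.exists_equiv_fin V
  obtain ⟨n, rfl⟩ := Nat.exists_eq_succ_of_ne_zero (n := n) <| by
    rintro rfl
    exact (e (Classical.arbitrary V)).elim0
  exact (nonempty_homeomorph_fin_succ_prod d n).map
    ((e.toHomeomorphOfDiscrete.prodCongr (.refl X)).trans ·)

/-- Appending a coordinate to a sequence. -/
def sequenceProdHomeomorph (Y : Type*) [TopologicalSpace Y] : (ℕ → Y) × Y ≃ₜ (ℕ → Y) :=
  ((Homeomorph.refl _).prodCongr (Homeomorph.funUnique Unit Y).symm).trans <|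
    Homeomorph.sumArrowHomeomorphProdArrow.symm.trans <|
    Homeomorph.piCongrLeft (Y := fun _ => Y) Equiv.natSumPUnitEquivNat

/-- Two copies of the Cantor space form a Cantor space, as an additional bit tells which copy a
point lies in. -/
def cantorSumHomeomorph : CantorSp ⊕ CantorSp ≃ₜ CantorSp :=
  let bit : Unit ⊕ Unit ≃ₜ Bool := Equiv.boolEquivPUnitSumPUnit.symm.toHomeomorphOfDiscrete
  let u : Unit × CantorSp ≃ₜ CantorSp := .uniqueProd Unit CantorSp
  (u.symm.sumCongr u.symm).trans <| Homeomorph.sumProdDistrib.symm.trans <|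
    (bit.prodCongr (.refl CantorSp)).trans <| (Homeomorph.prodComm _ _).trans <|
    sequenceProdHomeomorph Bool

theorem nonempty_homeomorph_countable_pi (ι Y : Type*) [Countable ι] [Nonempty ι]
    [TopologicalSpace Y] : Nonempty ((ι → ℕ → Y) ≃ₜ (ℕ → Y)) := by
  obtain ⟨c⟩ : Nonempty (ι × ℕ ≃ ℕ) := nonempty_equiv_of_countable
  exact ⟨Homeomorph.piCurry.symm.trans (Homeomorph.piCongrLeft (Y := fun _ => Y) c)⟩

end CantorSpace

section ExistenceOfFreeAction

theorem exists_homeomorph_pow_eq_one_forall_apply_ne {X : Type*} [TopologicalSpace X]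
    (d : X ⊕ X ≃ₜ X) {n : ℕ} (hn : n ≠ 1) : ∃ σ : X ≃ₜ X, σ ^ n = 1 ∧ ∀ x, σ x ≠ x := by
  obtain ⟨p, hp, hpn⟩ := Nat.exists_prime_and_dvd hn
  have : Fact p.Prime := ⟨hp⟩
  let _ : TopologicalSpace (ZMod p) := ⊥
  have : DiscreteTopology (ZMod p) := ⟨rfl⟩
  obtain ⟨e⟩ := nonempty_homeomorph_finite_prod (V := ZMod p) d
  let ψ : Equiv.Perm (ZMod p) →* (X ≃ₜ X) :=
    (homeoConj e).comp (homeoProd.comp ((permHomeo (ZMod p)).prod 1))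
  refine ⟨ψ (Equiv.addLeft 1), ?_, homeoConj_apply_ne e fun z hz => ?_⟩
  · have hn0 : (n : ZMod p) = 0 := (ZMod.natCast_eq_zero_iff n p).2 hpn
    rw [← map_pow, Equiv.nsmul_addLeft, nsmul_one, hn0, Equiv.addLeft_zero, map_one]
  · simpa using congrArg Prod.fst hz

variable {Γ : Type*} [Group Γ] [Countable Γ]

theorem exists_cantor_action_forall_apply_ne {γ : Γ} (hγ : γ ≠ 1) :
    ∃ ρ : Γ →* (CantorSp ≃ₜ CantorSp), ∀ x, ρ γ x ≠ x := by
  let c : Subgroup.zpowers γ := ⟨γ, Subgroup.mem_zpowers γ⟩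
  have hc : ∀ x, x ∈ Subgroup.zpowers c := by
    rintro ⟨_, k, rfl⟩
    exact ⟨k, rfl⟩
  obtain ⟨σ, hσ, hσ_ne⟩ := exists_homeomorph_pow_eq_one_forall_apply_ne cantorSumHomeomorph
    (n := orderOf c) (by simpa [c] using hγ)
  let τ : Subgroup.zpowers γ →* (CantorSp ≃ₜ CantorSp) :=
    monoidHomOfForallMemZpowers hc (orderOf_dvd_of_pow_eq_one hσ)
  have hτ : τ c = σ := monoidHomOfForallMemZpowers_apply_gen hc _
  have : Countable (Γ ⧸ Subgroup.zpowers γ) := QuotientGroup.mk_surjective.countable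
  obtain ⟨e⟩ := nonempty_homeomorph_countable_pi (Γ ⧸ Subgroup.zpowers γ) Bool
  exact ⟨(homeoConj e).comp (homeoCoind τ), homeoConj_apply_ne e <|
    homeoCoind_apply_ne (h := c) (hτ ▸ hσ_ne)⟩

theorem exists_free_cantor_action (Γ : Type*) [Group Γ] [Countable Γ] :
    ∃ ρ : Γ →* (CantorSp ≃ₜ CantorSp), ∀ γ, γ ≠ 1 → ∀ x, ρ γ x ≠ x := by
  choose! ρ hρ using fun γ : Γ => exists_cantor_action_forall_apply_ne (γ := γ)
  obtain ⟨e⟩ := nonempty_homeomorph_countable_pi Γ Bool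
  exact ⟨(homeoConj e).comp (homeoPi.comp (MonoidHom.pi ρ)), fun γ hγ =>
    homeoConj_apply_ne e fun z hz => hρ γ hγ (z γ) (congrFun hz γ)⟩

end ExistenceOfFreeAction

section Approximation

theorem tendstoUniformly_pi_iff {ι κ Z : Type*} {E : κ → Type*} [∀ k, UniformSpace (E k)]
    {F : ι → Z → ∀ k, E k} {f : Z → ∀ k, E k} {l : Filter ι} :
    TendstoUniformly F f l ↔
      ∀ k, TendstoUniformly (fun i z => F i z k) (fun z => f z k) l := by
  simp only [tendstoUniformly_iff_tendsto, Pi.uniformity, tendsto_iInf, tendsto_comap_iff,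
    Function.comp_def]

theorem exists_homeomorph_prod_apply_eq_fst (Y : Type*) [TopologicalSpace Y] (n : ℕ) :
    ∃ h : (ℕ → Y) × (ℕ → Y) ≃ₜ (ℕ → Y), ∀ p, ∀ k < n, h p k = p.1 k := by
  obtain ⟨σ, hσ⟩ := Equiv.Perm.exists_extending_pair
    (fun k : Fin n => Equiv.natSumNatEquivNat (.inl k)) Fin.val
    (fun i j hij => by simpa [Fin.ext_iff] using hij) Fin.val_injective
  let c : ℕ ⊕ ℕ ≃ ℕ := Equiv.natSumNatEquivNat.trans σ
  have hc : ∀ k < n, c (.inl k) = k := fun k hk => hσ ⟨k, hk⟩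
  refine ⟨Homeomorph.sumArrowHomeomorphProdArrow.symm.trans
    (Homeomorph.piCongrLeft (Y := fun _ => Y) c), fun p k hk => ?_⟩
  conv_lhs => rw [← hc k hk]
  exact Homeomorph.piCongrLeft_apply_apply (Y := fun _ => Y) c _ _

theorem exists_homeomorph_prod_tendstoUniformly_fst (Y : Type*) [UniformSpace Y] :
    ∃ h : ℕ → ((ℕ → Y) × (ℕ → Y) ≃ₜ (ℕ → Y)),
      TendstoUniformly (fun n => h n) Prod.fst atTop := by
  choose h hh using exists_homeomorph_prod_apply_eq_fst Y
  refine ⟨h, tendstoUniformly_pi_iff.2 fun k u hu => ?_⟩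
  filter_upwards [eventually_gt_atTop k] with n hn p
  rw [hh n p k hn]
  exact refl_mem_uniformity hu

theorem tendstoUniformly_conj_prodMap {ι X Y : Type*} [UniformSpace X] {l : Filter ι}
    {h : ι → X × Y ≃ X} (hh : TendstoUniformly (fun i => h i) Prod.fst l) {g : X → X}
    (hg : UniformContinuous g) (r : Y → Y) :
    TendstoUniformly (fun i x => h i (Prod.map g r ((h i).symm x))) g l := by
  have fst_symm : TendstoUniformly (fun i x => ((h i).symm x).1) id l := fun u hu => by
    filter_upwards [hh _ (symm_le_uniformity hu)] with i hi x
    simpa using hi ((h i).symm x)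
  intro u hu
  obtain ⟨v, hv, hvu⟩ := comp_mem_uniformity_sets hu
  filter_upwards [hh v hv, hg.comp_tendstoUniformly fst_symm v hv] with i hi hgi x
  exact hvu ⟨_, hgi x, hi (Prod.map g r ((h i).symm x))⟩

theorem tendsto_cantorHomeo {ι : Type*} {l : Filter ι} {F : ι → (CantorSp ≃ₜ CantorSp)}
    {φ : CantorSp ≃ₜ CantorSp} (h : TendstoUniformly (fun i => F i) φ l)
    (h_symm : TendstoUniformly (fun i => (F i).symm) φ.symm l) : Tendsto F l (𝓝 φ) := by
  rw [nhds_induced, tendsto_comap_iff, nhds_prod_eq]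
  exact (ContinuousMap.tendsto_iff_tendstoUniformly.2 h).prodMk
    (ContinuousMap.tendsto_iff_tendstoUniformly.2 h_symm)

theorem tendsto_homeoConj_homeoProd {ι Y : Type*} [TopologicalSpace Y] {l : Filter ι}
    {h : ι → CantorSp × Y ≃ₜ CantorSp} (hh : TendstoUniformly (fun i => h i) Prod.fst l)
    (φ : CantorSp ≃ₜ CantorSp) (ψ : Y ≃ₜ Y) :
    Tendsto (fun i => homeoConj (h i) (homeoProd (φ, ψ))) l (𝓝 φ) :=
  have conj_tendsto (φ : CantorSp ≃ₜ CantorSp) (ψ : Y ≃ₜ Y) :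
      TendstoUniformly (fun i => homeoConj (h i) (homeoProd (φ, ψ))) φ l :=
    tendstoUniformly_conj_prodMap (h := fun i => (h i).toEquiv) hh
      (CompactSpace.uniformContinuous_of_continuous φ.continuous) ψ
  tendsto_cantorHomeo (conj_tendsto φ ψ) (conj_tendsto φ.symm ψ.symm)

end Approximation

section FreeActions

/-- The space `𝒮 = Hom(Γ, Homeo(X))` of actions of `Γ` on the Cantor space `X`, topologized as a
subspace of the product `Homeo(X)^Γ`. -/
abbrev CantorAction (Γ : Type*) [Group Γ] :=
  {α : Γ → (CantorSp ≃ₜ CantorSp) // ∀ γ γ', α (γ * γ') = (α γ').trans (α γ)}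

/-- The free actions: no `γ ≠ 1` has a fixed point. -/
def freeCantorActions (Γ : Type*) [Group Γ] : Set (CantorAction Γ) :=
  {α | ∀ γ : Γ, γ ≠ 1 → ∀ x : CantorSp, α.1 γ x ≠ x}

theorem isOpen_setOf_continuousMap_apply_ne {X : Type*} [TopologicalSpace X] [CompactSpace X]
    [T2Space X] : IsOpen {f : C(X, X) | ∀ x, f x ≠ x} := by
  have fixed_closed : IsClosed {p : C(X, X) × X | p.1 p.2 = p.2} :=
    isClosed_eq (by fun_prop) (by fun_prop)
  convert (isClosedMap_fst_of_compactSpace _ fixed_closed).isOpen_compl using 1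
  ext f
  simp

theorem isOpen_setOf_cantorHomeo_apply_ne :
    IsOpen {φ : CantorSp ≃ₜ CantorSp | ∀ x, φ x ≠ x} :=
  isOpen_setOf_continuousMap_apply_ne.preimage (continuous_fst.comp continuous_induced_dom)

theorem isGδ_freeCantorActions (Γ : Type*) [Group Γ] [Countable Γ] :
    IsGδ (freeCantorActions Γ) := by
  have iInter_eq : freeCantorActions Γ =
      ⋂ (γ : Γ) (_ : γ ≠ 1), {α | ∀ x, α.1 γ x ≠ x} := by
    ext α
    simp [freeCantorActions]
  rw [iInter_eq]
  refine .iInter fun γ => .iInter fun _ => IsOpen.isGδ ?_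
  have continuous_apply_γ : Continuous fun α : CantorAction Γ => α.1 γ :=
    (continuous_apply γ).comp continuous_subtype_val
  exact isOpen_setOf_cantorHomeo_apply_ne.preimage continuous_apply_γ

theorem dense_freeCantorActions (Γ : Type*) [Group Γ] [Countable Γ] :
    Dense (freeCantorActions Γ) := by
  intro α
  obtain ⟨ρ, hρ⟩ := exists_free_cantor_action Γ
  obtain ⟨h, hh⟩ := exists_homeomorph_prod_tendstoUniformly_fst Bool
  let αρ : Γ →* (CantorSp × CantorSp ≃ₜ CantorSp × CantorSp) :=
    homeoProd.comp ((MonoidHom.mk' α.1 α.2).prod ρ)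
  let β (n : ℕ) : CantorAction Γ := ⟨(homeoConj (h n)).comp αρ, map_mul _⟩
  have hβ_free (n : ℕ) : β n ∈ freeCantorActions Γ := fun γ hγ =>
    homeoConj_apply_ne (h n) fun p hp => hρ γ hγ p.2 (congrArg Prod.snd hp)
  have hβ_tendsto : Tendsto β atTop (𝓝 α) :=
    tendsto_subtype_rng.2 <| tendsto_pi_nhds.2 fun γ =>
      tendsto_homeoConj_homeoProd hh (α.1 γ) (ρ γ)
  exact mem_closure_of_tendsto hβ_tendsto (.of_forall hβ_free)

theorem free_actions_dense_Gdelta_general (Γ : Type*) [Group Γ] [Countable Γ] :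
    IsGδ (freeCantorActions Γ) ∧ Dense (freeCantorActions Γ) :=
  ⟨isGδ_freeCantorActions Γ, dense_freeCantorActions Γ⟩

end FreeActions

/-- Let `Γ` be the free group on the disjoint union `S ⊔ T` of two disjoint
countably infinite sets.  The set of free actions in `𝒮 = Hom(Γ, Homeo(X))` (those `α`
with `α(γ)(x) ≠ x` for all `γ ≠ 1` and all `x`) is a dense `G_δ` subset of `𝒮`. -/
theorem free_actions_dense_Gdelta
    (S T : Type) [Countable S] [Infinite S] [Countable T] [Infinite T] :
    IsGδ {α : {α : FreeGroup (S ⊕ T) → (CantorSp ≃ₜ CantorSp) //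
        ∀ γ γ', α (γ * γ') = (α γ').trans (α γ)} |
      ∀ γ : FreeGroup (S ⊕ T), γ ≠ 1 → ∀ x : CantorSp, (α.1 γ) x ≠ x} ∧
    Dense {α : {α : FreeGroup (S ⊕ T) → (CantorSp ≃ₜ CantorSp) //
        ∀ γ γ', α (γ * γ') = (α γ').trans (α γ)} |
      ∀ γ : FreeGroup (S ⊕ T), γ ≠ 1 → ∀ x : CantorSp, (α.1 γ) x ≠ x} :=
  free_actions_dense_Gdelta_general (FreeGroup (S ⊕ T))
end

section
/- Let X = {0,1}^ℕ be the Cantor space, let Γ be the free group on the disjoint union S ⊔ T of two disjoint countably infinite sets S and T, and let Γ_S be the subgroup of Γ generated by S. There exists an action α of Γ on X by homeomorphisms that is free, topologically amenable, and whose restriction to Γ_S is minimal (every Γ_S-orbit is dense in X). -/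
/-- An action `α` of a (countable discrete) group `Γ` by homeomorphisms on a compact
Hausdorff space `Y` is topologically amenable if for every finite `F ⊆ Γ` and `ε > 0`
there is a map `y ↦ m_y` from `Y` to the finitely supported probability densities on `Γ`,
continuous for the `ℓ¹`-metric, such that `∑_h |m_y(g⁻¹h) − m_{α(g)(y)}(h)| < ε` for all
`g ∈ F`, `y ∈ Y`. -/
def TopologicallyAmenable {Γ Y : Type*} [Group Γ] [TopologicalSpace Y]
    (α : Γ → Y → Y) : Prop :=
  ∀ F : Finset Γ, ∀ ε : ℝ, 0 < ε →
    ∃ m : Y → Γ → ℝ,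
      (∀ y γ, 0 ≤ m y γ ∧ m y γ ≤ 1) ∧
      (∀ y, (Function.support (m y)).Finite) ∧
      (∀ y, ∑' γ, m y γ = 1) ∧
      (∀ y : Y, ∀ δ : ℝ, 0 < δ → ∃ U : Set Y, IsOpen U ∧ y ∈ U ∧
        ∀ z ∈ U, (∑' γ, |m y γ - m z γ|) < δ) ∧
      (∀ g ∈ F, ∀ y : Y, (∑' h, |m y (g⁻¹ * h) - m (α g y) h|) < ε)

namespace CantorAction

/-! ### Words in free groups -/

section FreeGroupWords

variable {I : Type*}

theorem exists_finset_subset_closure_image {G ι : Type*} [Group G] {s : ι → G}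
    {F : Finset G} (hF : (F : Set G) ⊆ Subgroup.closure (Set.range s)) :
    ∃ B : Finset ι, (F : Set G) ⊆ Subgroup.closure (s '' B) := by
  have directed : Directed (· ≤ ·) fun B : Finset ι => Subgroup.closure (s '' B) :=
    Monotone.directed_le fun _ _ hBC => Subgroup.closure_mono (Set.image_mono hBC)
  have cover : ⋃ B : Finset ι, (B : Set ι) = Set.univ :=
    Set.iUnion_eq_univ_iff.2 fun i => ⟨{i}, by simp⟩
  rw [← Set.image_univ, ← cover, Set.image_iUnion, Subgroup.closure_iUnion,
    Subgroup.coe_iSup_of_directed directed] at hF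
  exact directed.exists_mem_subset_of_finset_subset_biUnion hF

open Classical in
theorem toWord_of_mul (i : I) (g : FreeGroup I) :
    (FreeGroup.of i * g).toWord = (i, true) :: g.toWord ∨
      g.toWord = (i, false) :: (FreeGroup.of i * g).toWord := by
  have hword : (FreeGroup.of i * g).toWord = FreeGroup.reduce ((i, true) :: g.toWord) := by
    rw [FreeGroup.toWord_mul, FreeGroup.toWord_of, List.singleton_append]
  rw [hword, FreeGroup.reduce.cons, FreeGroup.reduce_toWord]
  rcases g.toWord with _ | ⟨⟨k, b⟩, w⟩
  · simp
  · by_cases hk : i = k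
    · subst hk; cases b <;> simp
    · simp [hk]

/-- The subgroup of the free group generated by the letters in `L`. -/
def letterGroup (L : Set I) : Subgroup (FreeGroup I) :=
  Subgroup.closure (FreeGroup.of '' L)

theorem letterGroup_mono {L L' : Set I} (h : L ⊆ L') : letterGroup L ≤ letterGroup L' :=
  Subgroup.closure_mono (Set.image_mono h)

theorem of_mem_letterGroup {L : Set I} {i : I} (hi : i ∈ L) : FreeGroup.of i ∈ letterGroup L :=
  Subgroup.subset_closure ⟨i, hi, rfl⟩

theorem map_mul_of_mem {G : Type*} [Group G] {H : Subgroup G} (π : G →[H] G) {h : G} (hh : h ∈ H)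
    (g : G) : π (h * g) = h * π g :=
  map_smul π (⟨h, hh⟩ : H) g

open Classical in
/-- The longest initial segment, with letters in `L`, of the reduced word of an element of the free
group. -/
noncomputable def initialPart (L : Set I) (g : FreeGroup I) : FreeGroup I :=
  FreeGroup.mk (g.toWord.takeWhile (·.1 ∈ L))

theorem initialPart_of_mul {L : Set I} {i : I} (hi : i ∈ L) (g : FreeGroup I) :
    initialPart L (FreeGroup.of i * g) = FreeGroup.of i * initialPart L g := by
  rcases toWord_of_mul i g with h | h
  · simp only [initialPart, h, List.takeWhile_cons, hi, decide_true, if_true]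
    rw [FreeGroup.of, FreeGroup.mul_mk]; rfl
  · simp only [initialPart, h, List.takeWhile_cons, hi, decide_true, if_true]
    rw [← inv_mul_eq_iff_eq_mul, FreeGroup.of, FreeGroup.inv_mk, FreeGroup.mul_mk]
    rfl

theorem initialPart_mul {L : Set I} {h : FreeGroup I} (hh : h ∈ letterGroup L) (g : FreeGroup I) :
    initialPart L (h * g) = h * initialPart L g := by
  induction hh using Subgroup.closure_induction generalizing g with
  | mem x hx =>
    obtain ⟨i, hi, rfl⟩ := hx
    exact initialPart_of_mul hi g
  | one => rw [one_mul, one_mul]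
  | mul x y _ _ hx hy => rw [mul_assoc, hx, hy, mul_assoc]
  | inv x _ hx => rw [eq_inv_mul_iff_mul_eq, ← hx, mul_inv_cancel_left]

theorem initialPart_eq_one_or {L : Set I} {i : I} (hi : i ∉ L) (g : FreeGroup I) :
    initialPart L g = 1 ∨ initialPart L (FreeGroup.of i * g) = 1 := by
  rcases toWord_of_mul i g with h | h
  · right
    simp only [initialPart, h, List.takeWhile_cons, hi, decide_false, Bool.false_eq_true, if_false,
      FreeGroup.one_eq_mk]
  · left
    simp only [initialPart, h, List.takeWhile_cons, hi, decide_false, Bool.false_eq_true, if_false,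
      FreeGroup.one_eq_mk]

/-- `initialPart` as a map that is equivariant for left multiplication by words in `L`. -/
noncomputable def initialPartHom (L : Set I) : FreeGroup I →[letterGroup L] FreeGroup I where
  toFun := initialPart L
  map_smul' h := initialPart_mul h.2

theorem initialPartHom_apply (L : Set I) (g : FreeGroup I) :
    initialPartHom L g = initialPart L g :=
  rfl

/-- A two-colouring of a group that changes along each edge `g — γ * g`. -/
def IsAlternating {G : Type*} [Group G] (γ : G) (c : G → Bool) : Prop :=
  ∀ g, c (γ * g) ≠ c g

theorem exists_isAlternating {G : Type*} [Group G] {γ : G} (hγ : ¬IsOfFinOrder γ) :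
    ∃ c, IsAlternating γ c := by
  obtain ⟨R, hR, -⟩ := (Subgroup.zpowers γ).exists_isComplement_right 1
  choose k hk using fun g => Subgroup.mem_zpowers_iff.1 (hR.equiv g).1.2
  have k_mul (g : G) : k (γ * g) = k g + 1 := by
    refine injective_zpow_iff_not_isOfFinOrder.2 hγ ?_
    simp only [add_comm (k g), zpow_one_add, hk,
      hR.equiv_mul_left_of_mem (Subgroup.mem_zpowers γ)]
    rfl
  refine ⟨fun g => decide (Even (k g)), fun g => ?_⟩
  simp only [k_mul, Int.even_add_one, ne_eq, decide_eq_decide, not_iff_self, not_false_eq_true]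

/-- A pointer assigns to each `g` in the free group at most one letter of `B` or inverse of such a
letter, that is, an edge at `g` in the Cayley graph, in such a way that every edge with label in `B`
is assigned to one of its ends. -/
def IsPointer {B : Set I} (d : FreeGroup I → Option (B × Bool)) : Prop :=
  ∀ (i : B) (g : FreeGroup I), d g = some (i, true) ∨ d (FreeGroup.of i.1 * g) = some (i, false)

open Classical in
theorem exists_isPointer (B : Set I) : ∃ d : FreeGroup I → Option (B × Bool), IsPointer d := by
  -- Point towards the root `1`.
  refine ⟨fun g => g.toWord.head?.bind fun x =>
    if h : x.1 ∈ B then some (⟨x.1, h⟩, !x.2) else none, fun i g => ?_⟩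
  rcases toWord_of_mul i.1 g with h | h
  · right; simp [h]
  · left; simp [h]

end FreeGroupWords

/-! ### The Cantor space and minimal actions -/

section CantorSpace

variable {Y : Type*} [TopologicalSpace Y]

theorem exists_isClopen_split [PerfectSpace Y] [TotallySeparatedSpace Y] {C V : Set Y}
    (hC : IsOpen C) (hV : IsClopen V) :
    ∃ D, IsClopen D ∧ (∀ y ∈ C, ∃ z ∈ C, ¬(z ∈ D ↔ y ∈ D)) ∧
      ∀ y ∈ C, ∀ z ∈ C, (z ∈ D ↔ y ∈ D) → (z ∈ V ↔ y ∈ V) := by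
  by_cases hCV : ∃ y ∈ C, ∃ z ∈ C, y ∈ V ∧ z ∉ V
  · obtain ⟨u, hu, v, hv, huV, hvV⟩ := hCV
    refine ⟨V, hV, fun y _ => ?_, fun _ _ _ _ h => h⟩
    by_cases hy : y ∈ V
    exacts [⟨v, hv, by simp [hvV, hy]⟩, ⟨u, hu, by simp [huV, hy]⟩]
  · push Not at hCV
    have const : ∀ y ∈ C, ∀ z ∈ C, (z ∈ V ↔ y ∈ V) :=
      fun y hy z hz => ⟨hCV z hz y hy, hCV y hy z hz⟩
    obtain rfl | ⟨u, hu⟩ := C.eq_empty_or_nonempty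
    · exact ⟨V, hV, by simp, by simp⟩
    obtain ⟨v, hv, hvu⟩ : ∃ v ∈ C, v ≠ u :=
      ((eventually_nhdsWithin_of_eventually_nhds (hC.mem_nhds hu)).and
        self_mem_nhdsWithin).exists (f := nhdsWithin u {u}ᶜ)
    obtain ⟨D, hD, huD, hvD⟩ := exists_isClopen_of_totally_separated hvu.symm
    refine ⟨D, hD, fun y _ => ?_, fun y hy z hz _ => const y hy z hz⟩
    by_cases hy : y ∈ D
    exacts [⟨v, hv, fun h => hvD (h.2 hy)⟩, ⟨u, hu, fun h => hy (h.1 huD)⟩]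

theorem exists_isLocallyConstant_bool_split [PerfectSpace Y] [TotallySeparatedSpace Y] {K : Type*}
    {f : Y → K} (hf : IsLocallyConstant f) {V : Set Y} (hV : IsClopen V) :
    ∃ b : Y → Bool, IsLocallyConstant b ∧ (∀ y, ∃ z, f z = f y ∧ b z ≠ b y) ∧
      ∀ y z, f z = f y → b z = b y → (z ∈ V ↔ y ∈ V) := by
  choose D hD hcut hsep using fun k => exists_isClopen_split (hf.isOpen_fiber k) hV
  have mem_iff (k : K) (y z : Y) :
      (z ∈ D k ↔ y ∈ D k) ↔ (D k).boolIndicator z = (D k).boolIndicator y :=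
    (iff_congr ((D k).mem_iff_boolIndicator z) ((D k).mem_iff_boolIndicator y)).trans
      Bool.eq_iff_iff.symm
  refine ⟨fun y => (D (f y)).boolIndicator y, ?_, fun y => ?_, fun y z hfyz hb => ?_⟩
  · refine (IsLocallyConstant.iff_eventually_eq _).2 fun y => ?_
    have hDy : IsLocallyConstant (D (f y)).boolIndicator :=
      (IsLocallyConstant.iff_continuous _).2 ((continuous_boolIndicator_iff_isClopen _).2 (hD _))
    filter_upwards [hf.eventually_eq y, hDy.eventually_eq y] with z hz hDz
    rw [hz, hDz]
  · obtain ⟨z, hz : f z = f y, hzD⟩ := hcut (f y) y rfl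
    exact ⟨z, hz, by simpa only [hz, mem_iff] using hzD⟩
  · exact hsep (f y) y rfl z hfyz (by simpa only [hfyz, mem_iff] using hb)

theorem exists_seq_isLocallyConstant_bool_split [PerfectSpace Y] [TotallySeparatedSpace Y]
    {V : ℕ → Set Y} (hV : ∀ n, IsClopen (V n)) :
    ∃ b : ℕ → Y → Bool, (∀ n, IsLocallyConstant (b n)) ∧
      (∀ n y, ∃ z, (∀ k < n, b k z = b k y) ∧ b n z ≠ b n y) ∧
      ∀ n y z, (∀ k ≤ n, b k z = b k y) → (z ∈ V n ↔ y ∈ V n) := by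
  choose next hnext hcut hsep using fun (n : ℕ) (f : {f : Y → List Bool // IsLocallyConstant f}) =>
    exists_isLocallyConstant_bool_split f.2 (hV n)
  let f : ℕ → {f : Y → List Bool // IsLocallyConstant f} :=
    Nat.rec ⟨fun _ => [], .const _⟩ fun n f =>
      ⟨fun y => next n f y :: f.1 y, (hnext n f).comp₂ f.2 List.cons⟩
  have hf : ∀ n y z, (f n).1 z = (f n).1 y ↔ ∀ k < n, next k (f k) z = next k (f k) y := by
    intro n y z
    induction n with
    | zero => simp [f]
    | succ n ih => rw [Nat.forall_lt_succ_right, ← ih, and_comm]; exact List.cons_eq_cons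
  refine ⟨fun n => next n (f n), fun n => hnext n _, fun n y => ?_, fun n y z h => ?_⟩
  · obtain ⟨z, hz, hz'⟩ := hcut n (f n) y
    exact ⟨z, (hf n y z).1 hz, hz'⟩
  · exact hsep n (f n) y z ((hf n y z).2 fun k hk => h k hk.le) (h n le_rfl)

theorem surjective_of_isLocallyConstant_of_cut [CompactSpace Y] [Nonempty Y] {b : ℕ → Y → Bool}
    (hb : ∀ n, IsLocallyConstant (b n))
    (hcut : ∀ n y, ∃ z, (∀ k < n, b k z = b k y) ∧ b n z ≠ b n y) :
    Function.Surjective fun y n => b n y := by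
  intro x
  let C (n : ℕ) : Set Y := {y | ∀ k < n, b k y = x k}
  have C_nonempty (n : ℕ) : (C n).Nonempty := by
    induction n with
    | zero => exact ⟨Classical.arbitrary Y, by simp [C]⟩
    | succ n ih =>
      obtain ⟨y, hy⟩ := ih
      by_cases hyx : b n y = x n
      · exact ⟨y, Nat.forall_lt_succ_right.2 ⟨hy, hyx⟩⟩
      · obtain ⟨z, hz, hzy⟩ := hcut n y
        refine ⟨z, Nat.forall_lt_succ_right.2 ⟨fun k hk => (hz k hk).trans (hy k hk), ?_⟩⟩
        rw [Bool.eq_not.2 hzy, Bool.eq_not.2 hyx, Bool.not_not]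
  have C_isClosed (n : ℕ) : IsClosed (C n) := by
    simp only [C, Set.ofPred_forall]
    exact isClosed_iInter fun k => isClosed_iInter fun _ =>
      isClosed_eq (hb k).continuous continuous_const
  obtain ⟨y, hy⟩ := IsCompact.nonempty_iInter_of_sequence_nonempty_isCompact_isClosed C
    (fun n y hy k hk => hy k (hk.trans n.lt_succ_self)) C_nonempty (C_isClosed 0).isCompact
    C_isClosed
  exact ⟨y, funext fun n => Set.mem_iInter.1 hy (n + 1) n n.lt_succ_self⟩

theorem nonempty_homeomorph_nat_bool [CompactSpace Y] [T2Space Y] [TotallyDisconnectedSpace Y]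
    [SecondCountableTopology Y] [PerfectSpace Y] [Nonempty Y] : Nonempty (Y ≃ₜ (ℕ → Bool)) := by
  have : Countable (TopologicalSpace.Clopens Y) :=
    TopologicalSpace.Clopens.countable_iff_secondCountable.2 ‹_›
  obtain ⟨V, hV⟩ := exists_surjective_nat (TopologicalSpace.Clopens Y)
  obtain ⟨b, hb, hcut, hsep⟩ := exists_seq_isLocallyConstant_bool_split fun n => (V n).isClopen
  have inj : Function.Injective fun y n => b n y := by
    intro y z hyz
    by_contra hne
    obtain ⟨C, hC, hyC, hzC⟩ := exists_isClopen_of_totally_separated hne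
    obtain ⟨n, hn⟩ := hV ⟨C, hC⟩
    have hVn := hsep n y z fun k _ => congrFun hyz.symm k
    rw [hn] at hVn
    exact hzC (hVn.2 hyC)
  have cont : Continuous fun y n => b n y := continuous_pi fun n => (hb n).continuous
  have surj := surjective_of_isLocallyConstant_of_cut hb hcut
  exact ⟨Continuous.homeoOfEquivCompactToT2 (f := .ofBijective _ ⟨inj, surj⟩) cont⟩

end CantorSpace

theorem infinite_of_isCancelSMul (G : Type*) {Y : Type*} [Group G] [MulAction G Y] [Infinite G]
    [IsCancelSMul G Y] [Nonempty Y] : Infinite Y :=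
  have ⟨y⟩ := ‹Nonempty Y›
  .of_injective (fun g : G => g • y) fun _ _ => IsCancelSMul.right_cancel _ _ y

section Minimal

open MulAction
open scoped Pointwise

variable (G : Type*) {Y : Type*} [Group G] [TopologicalSpace Y] [MulAction G Y]

theorem finite_of_isMinimal_of_isOpen_singleton [ContinuousConstSMul G Y] [IsMinimal G Y]
    [CompactSpace Y] {y : Y} (hy : IsOpen {y}) : Finite Y := by
  obtain ⟨F, hF⟩ := isCompact_univ.exists_finite_cover_smul G hy (Set.singleton_nonempty y)
  exact Set.finite_univ_iff.1 ((F.finite_toSet.biUnion fun g _ =>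
    (Set.finite_singleton y).smul_set).subset hF)

theorem perfectSpace_of_isMinimal [ContinuousConstSMul G Y] [IsMinimal G Y] [CompactSpace Y]
    [Infinite Y] : PerfectSpace Y :=
  perfectSpace_iff_forall_not_isolated.2 fun y => ⟨fun hy => not_finite_iff_infinite.2 ‹_› <|
    finite_of_isMinimal_of_isOpen_singleton G <| (isOpen_singleton_iff_punctured_nhds y).2 hy⟩

theorem nonempty_homeomorph_cantorSp_of_isMinimal [ContinuousConstSMul G Y] [IsMinimal G Y]
    [CompactSpace Y] [T2Space Y] [TotallyDisconnectedSpace Y] [SecondCountableTopology Y]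
    [Infinite Y] : Nonempty (Y ≃ₜ CantorSp) :=
  have := perfectSpace_of_isMinimal G (Y := Y)
  nonempty_homeomorph_nat_bool

end Minimal

/-! ### Amenability from pointers -/

section L1Norm

variable {G : Type*}

theorem summable_abs_coeff (f : MonoidAlgebra ℝ G) : Summable fun h => |f.coeff h| :=
  (summable_of_hasFiniteSupport f.coeff.hasFiniteSupport).abs

/-- The `ℓ¹`-norm on the group algebra `ℝ[G]`, whose elements serve as finitely supported
functions on `G` that can be translated by multiplication. -/
noncomputable def l1Norm (f : MonoidAlgebra ℝ G) : ℝ :=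
  ∑' h, |f.coeff h|

theorem l1Norm_add_le (f f' : MonoidAlgebra ℝ G) : l1Norm (f + f') ≤ l1Norm f + l1Norm f' := by
  rw [l1Norm, l1Norm, l1Norm, ← (summable_abs_coeff f).tsum_add (summable_abs_coeff f')]
  exact (summable_abs_coeff (f + f')).tsum_le_tsum (fun h => abs_add_le _ _)
    ((summable_abs_coeff f).add (summable_abs_coeff f'))

theorem l1Norm_neg (f : MonoidAlgebra ℝ G) : l1Norm (-f) = l1Norm f :=
  tsum_congr fun _ => abs_neg _

theorem l1Norm_smul (c : ℝ) (f : MonoidAlgebra ℝ G) : l1Norm (c • f) = |c| * l1Norm f := by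
  simp only [l1Norm, MonoidAlgebra.coeff_smul_apply, smul_eq_mul, abs_mul, tsum_mul_left]

theorem l1Norm_single (g : G) (c : ℝ) : l1Norm (.single g c) = |c| := by
  rw [l1Norm, tsum_eq_single g fun h hh => by simp [hh.symm]]
  simp

theorem l1Norm_single_one_mul [Group G] (g : G) (f : MonoidAlgebra ℝ G) :
    l1Norm (.single g 1 * f) = l1Norm f := by
  simp only [l1Norm, MonoidAlgebra.coeff_single_mul_apply, one_mul]
  exact (Equiv.mulLeft g⁻¹).tsum_eq fun h => |f.coeff h|

/-- The uniform distribution on the terms `w 0, …, w N` of a sequence. -/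
noncomputable def empiricalDensity (w : ℕ → G) (N : ℕ) : MonoidAlgebra ℝ G :=
  (N + 1 : ℝ)⁻¹ • ∑ k ∈ Finset.range (N + 1), .single (w k) 1

theorem empiricalDensity_nonneg (w : ℕ → G) (N : ℕ) (h : G) :
    0 ≤ (empiricalDensity w N).coeff h := by
  classical
  simp only [empiricalDensity, MonoidAlgebra.coeff_smul_apply, MonoidAlgebra.coeff_sum,
    Finsupp.finsetSum_apply, MonoidAlgebra.coeff_single, Finsupp.single_apply]
  positivity

theorem hasSum_empiricalDensity (w : ℕ → G) (N : ℕ) :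
    HasSum (empiricalDensity w N).coeff 1 := by
  classical
  have hsingle (k : ℕ) : HasSum (fun h => (MonoidAlgebra.single (w k) (1 : ℝ)).coeff h) 1 := by
    simpa only [MonoidAlgebra.coeff_single, Finsupp.single_apply, eq_comm] using
      hasSum_ite_eq (w k) (1 : ℝ)
  have hsum := (hasSum_sum fun k (_ : k ∈ Finset.range (N + 1)) => hsingle k).mul_left
    (N + 1 : ℝ)⁻¹
  have htotal : (N + 1 : ℝ)⁻¹ * ∑ _k ∈ Finset.range (N + 1), (1 : ℝ) = 1 := by
    have : (N + 1 : ℝ) ≠ 0 := by positivity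
    simp [this]
  rw [htotal] at hsum
  refine hsum.congr_fun fun h => ?_
  simp only [empiricalDensity, MonoidAlgebra.coeff_smul_apply, MonoidAlgebra.coeff_sum,
    Finsupp.finsetSum_apply, smul_eq_mul]

theorem single_mul_empiricalDensity [Group G] (g : G) (w : ℕ → G) (N : ℕ) :
    .single g 1 * empiricalDensity w N = empiricalDensity (fun k => g * w k) N := by
  simp only [empiricalDensity, mul_smul_comm, Finset.mul_sum, MonoidAlgebra.single_mul_single,
    mul_one]

theorem l1Norm_empiricalDensity_sub_le {v w : ℕ → G} (h : ∀ k, w (k + 1) = v k) (N : ℕ) :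
    l1Norm (empiricalDensity w N - empiricalDensity v N) ≤ 2 / (N + 1) := by
  have hdiff : empiricalDensity w N - empiricalDensity v N =
      (N + 1 : ℝ)⁻¹ • (.single (w 0) 1 + -.single (v N) 1) := by
    rw [empiricalDensity, empiricalDensity, ← smul_sub, Finset.sum_range_succ',
      Finset.sum_range_succ fun k => MonoidAlgebra.single (v k) (1 : ℝ)]
    simp only [h]
    abel_nf
  calc l1Norm (empiricalDensity w N - empiricalDensity v N)
    _ ≤ (N + 1 : ℝ)⁻¹ * (l1Norm (.single (w 0) 1) + l1Norm (-.single (v N) 1)) := by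
      rw [hdiff, l1Norm_smul, abs_of_nonneg (by positivity)]
      gcongr
      exact l1Norm_add_le _ _
    _ = 2 / (N + 1) := by
      rw [l1Norm_neg, l1Norm_single, l1Norm_single, abs_one]
      ring

end L1Norm

section Walk

variable {G Y : Type*} [Group G] [MulAction G Y]

/-- The `ℓ¹`-distance between the translate by `g` of the density at `y` and the density at
`g • y`. -/
noncomputable def equivarianceDefect (m : Y → MonoidAlgebra ℝ G) (g : G) (y : Y) : ℝ :=
  l1Norm (.single g 1 * m y - m (g • y))

theorem equivarianceDefect_one (m : Y → MonoidAlgebra ℝ G) (y : Y) :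
    equivarianceDefect m 1 y = 0 := by
  simp [equivarianceDefect, l1Norm, ← MonoidAlgebra.one_def]

theorem equivarianceDefect_mul_le (m : Y → MonoidAlgebra ℝ G) (g h : G) (y : Y) :
    equivarianceDefect m (g * h) y ≤
      equivarianceDefect m h y + equivarianceDefect m g (h • y) := by
  have split : .single (g * h) 1 * m y - m ((g * h) • y) =
      .single g 1 * (.single h 1 * m y - m (h • y)) +
        (.single g 1 * m (h • y) - m (g • h • y)) := by
    rw [mul_sub, ← mul_assoc, MonoidAlgebra.single_mul_single, mul_one, mul_smul]
    abel
  rw [equivarianceDefect, split]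
  refine (l1Norm_add_le _ _).trans_eq ?_
  rw [l1Norm_single_one_mul, equivarianceDefect, equivarianceDefect]

theorem equivarianceDefect_inv (m : Y → MonoidAlgebra ℝ G) (g : G) (y : Y) :
    equivarianceDefect m g⁻¹ y = equivarianceDefect m g (g⁻¹ • y) := by
  rw [equivarianceDefect, equivarianceDefect, ← l1Norm_neg, ← l1Norm_single_one_mul g, mul_neg,
    mul_sub, ← mul_assoc, MonoidAlgebra.single_mul_single, smul_inv_smul, mul_inv_cancel, mul_one,
    ← MonoidAlgebra.one_def, one_mul, neg_sub]

/-- The inverse of the group element that carries `y` to the `k`-th point of the trajectory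
`y, δ y • y, …` of the map `y ↦ δ y • y`. -/
def walk (δ : Y → G) : Y → ℕ → G
  | _, 0 => 1
  | y, k + 1 => (δ y)⁻¹ * walk δ (δ y • y) k

theorem isLocallyConstant_walk [TopologicalSpace Y] [ContinuousConstSMul G Y] {δ : Y → G}
    (hδ : IsLocallyConstant δ) (k : ℕ) : IsLocallyConstant fun y => walk δ y k := by
  induction k with
  | zero => exact .const 1
  | succ k ih =>
    refine (IsLocallyConstant.iff_eventually_eq _).2 fun y => ?_
    filter_upwards [hδ.eventually_eq y,
      (ih.comp_continuous (continuous_const_smul (δ y))).eventually_eq y] with z hδz hwz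
    rw [walk, walk, hδz]
    exact congrArg _ hwz

theorem isLocallyConstant_empiricalDensity_walk [TopologicalSpace Y] [ContinuousConstSMul G Y]
    {δ : Y → G} (hδ : IsLocallyConstant δ) (N : ℕ) :
    IsLocallyConstant fun y => empiricalDensity (walk δ y) N := by
  refine (IsLocallyConstant.iff_eventually_eq _).2 fun y => ?_
  filter_upwards [(Finset.range (N + 1)).eventually_all.2 fun k _ =>
    (isLocallyConstant_walk hδ k).eventually_eq y] with z hz
  exact congrArg _ (Finset.sum_congr rfl fun k hk => congrArg (MonoidAlgebra.single · 1) (hz k hk))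

theorem equivarianceDefect_walk_le_of_eq (δ : Y → G) (N : ℕ) {g : G} {y : Y} (h : δ y = g) :
    equivarianceDefect (fun y => empiricalDensity (walk δ y) N) g y ≤ 2 / (N + 1) := by
  rw [equivarianceDefect, single_mul_empiricalDensity]
  exact l1Norm_empiricalDensity_sub_le (fun k => by rw [walk, h, mul_inv_cancel_left]) N

theorem equivarianceDefect_walk_le (δ : Y → G) (N : ℕ) {g : G} {y : Y}
    (h : δ y = g ∨ δ (g • y) = g⁻¹) :
    equivarianceDefect (fun y => empiricalDensity (walk δ y) N) g y ≤ 2 / (N + 1) := by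
  obtain h | h := h
  · exact equivarianceDefect_walk_le_of_eq δ N h
  · have := equivarianceDefect_walk_le_of_eq δ N h
    rwa [equivarianceDefect_inv, inv_smul_smul] at this

theorem exists_equivarianceDefect_walk_le {δ : Y → G} {A : Set G}
    (hδ : ∀ g ∈ A, ∀ y, δ y = g ∨ δ (g • y) = g⁻¹) {g : G} (hg : g ∈ Subgroup.closure A) :
    ∃ C : ℝ, ∀ (N : ℕ) (y : Y),
      equivarianceDefect (fun y => empiricalDensity (walk δ y) N) g y ≤ C / (N + 1) := by
  induction hg using Subgroup.closure_induction with
  | mem g hg => exact ⟨2, fun N y => equivarianceDefect_walk_le δ N (hδ g hg y)⟩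
  | one => exact ⟨0, fun N y => by rw [equivarianceDefect_one, zero_div]⟩
  | mul g h _ _ ihg ihh =>
    obtain ⟨C, hC⟩ := ihg
    obtain ⟨D, hD⟩ := ihh
    refine ⟨D + C, fun N y => (equivarianceDefect_mul_le _ g h y).trans ?_⟩
    rw [add_div]
    exact add_le_add (hD N y) (hC N (h • y))
  | inv g _ ih =>
    obtain ⟨C, hC⟩ := ih
    exact ⟨C, fun N y => by rw [equivarianceDefect_inv]; exact hC N _⟩

theorem topologicallyAmenable_of_isLocallyConstant [TopologicalSpace Y]
    (h : ∀ (F : Finset G) (ε : ℝ), 0 < ε → ∃ m : Y → MonoidAlgebra ℝ G, IsLocallyConstant m ∧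
      (∀ y h, 0 ≤ (m y).coeff h) ∧ (∀ y, HasSum (m y).coeff 1) ∧
      ∀ g ∈ F, ∀ y, equivarianceDefect m g y < ε) :
    TopologicallyAmenable fun (g : G) (y : Y) => g • y := by
  intro F ε hε
  obtain ⟨m, hm, m_nonneg, m_sum, hdefect⟩ := h F ε hε
  refine ⟨fun y => (m y).coeff,
    fun y h => ⟨m_nonneg y h, le_hasSum (m_sum y) h fun _ _ => m_nonneg y _⟩,
    fun y => (m y).coeff.hasFiniteSupport, fun y => (m_sum y).tsum_eq, fun y ε' hε' => ?_,
    fun g hg y => ?_⟩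
  · exact ⟨m ⁻¹' {m y}, hm.isOpen_fiber _, rfl, fun z (hz : m z = m y) => by simpa [hz] using hε'⟩
  · simpa only [equivarianceDefect, l1Norm, MonoidAlgebra.coeff_sub, Finsupp.sub_apply,
      MonoidAlgebra.coeff_single_mul_apply, one_mul] using hdefect g hg y

theorem topologicallyAmenable_of_pointers [TopologicalSpace Y] [ContinuousConstSMul G Y]
    {ι : Type*} {s : ι → G} (hs : Subgroup.closure (Set.range s) = ⊤)
    (h : ∀ B : Finset ι, ∃ δ : Y → G, IsLocallyConstant δ ∧
      ∀ i ∈ B, ∀ y, δ y = s i ∨ δ (s i • y) = (s i)⁻¹) :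
    TopologicallyAmenable fun (g : G) (y : Y) => g • y := by
  refine topologicallyAmenable_of_isLocallyConstant fun F ε hε => ?_
  obtain ⟨B, hFB⟩ := exists_finset_subset_closure_image
    (s := s) (F := F) (by rw [hs]; exact Set.subset_univ _)
  obtain ⟨δ, hδ, hδB⟩ := h B
  have small : ∀ᶠ N : ℕ in Filter.atTop, ∀ g ∈ F, ∀ y,
      equivarianceDefect (fun y => empiricalDensity (walk δ y) N) g y < ε := by
    refine F.eventually_all.2 fun g hg => ?_
    obtain ⟨C, hC⟩ := exists_equivarianceDefect_walk_le (Set.forall_mem_image.2 hδB) (hFB hg)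
    have lim : Filter.Tendsto (fun N : ℕ => C / (N + 1 : ℝ)) Filter.atTop (nhds 0) := by
      exact_mod_cast (tendsto_const_div_atTop_nhds_zero_nat C).comp (Filter.tendsto_add_atTop_nat 1)
    exact (lim.eventually_lt_const hε).mono fun N hN y => (hC N y).trans_lt hN
  obtain ⟨N, hN⟩ := small.exists
  exact ⟨fun y => empiricalDensity (walk δ y) N,
    isLocallyConstant_empiricalDensity_walk hδ N, fun y => empiricalDensity_nonneg _ N,
    fun y => hasSum_empiricalDensity _ N, hN⟩

end Walk

theorem topologicallyAmenable_conj {Γ Y Z : Type*} [Group Γ] [TopologicalSpace Y]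
    [TopologicalSpace Z] {α : Γ → Y → Y} (h : TopologicallyAmenable α) (e : Y ≃ₜ Z) :
    TopologicallyAmenable fun g z => e (α g (e.symm z)) := by
  intro F ε hε
  obtain ⟨m, hm, hfin, hsum, hcont, hdefect⟩ := h F ε hε
  refine ⟨fun z => m (e.symm z), fun z => hm _, fun z => hfin _, fun z => hsum _,
    fun z ε' hε' => ?_, fun g hg z => by simpa using hdefect g hg (e.symm z)⟩
  obtain ⟨U, hU, hzU, hmU⟩ := hcont (e.symm z) ε' hε'
  exact ⟨e.symm ⁻¹' U, hU.preimage e.symm.continuous, hzU, fun w hw => hmU _ hw⟩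

/-! ### Subshifts of flexible type -/

open Filter MulAction Topology

section FullShift

variable {G J : Type*} {A : J → Type*}

/-- The product over `j : J` of the full shifts over `G` with alphabets `A j`, carrying the product
of the discrete topologies and the action of `G` by right translation of the argument. -/
def FullShift (G : Type*) {J : Type*} (A : J → Type*) : Type _ :=
  ∀ j, G → A j

instance : TopologicalSpace (FullShift G A) :=
  @Pi.topologicalSpace J _ fun _ => @Pi.topologicalSpace G _ fun _ => ⊥

instance : T2Space (FullShift G A) :=
  letI (j : J) : TopologicalSpace (A j) := ⊥
  haveI (j : J) : DiscreteTopology (A j) := ⟨rfl⟩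
  inferInstanceAs (T2Space (∀ j, G → A j))

instance : TotallyDisconnectedSpace (FullShift G A) :=
  letI (j : J) : TopologicalSpace (A j) := ⊥
  haveI (j : J) : DiscreteTopology (A j) := ⟨rfl⟩
  inferInstanceAs (TotallyDisconnectedSpace (∀ j, G → A j))

instance [∀ j, Finite (A j)] : CompactSpace (FullShift G A) :=
  letI (j : J) : TopologicalSpace (A j) := ⊥
  inferInstanceAs (CompactSpace (∀ j, G → A j))

instance [Countable G] [Countable J] [∀ j, Countable (A j)] :
    SecondCountableTopology (FullShift G A) :=
  letI (j : J) : TopologicalSpace (A j) := ⊥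
  haveI (j : J) : DiscreteTopology (A j) := ⟨rfl⟩
  inferInstanceAs (SecondCountableTopology (∀ j, G → A j))

theorem isLocallyConstant_apply (j : J) (h : G) :
    IsLocallyConstant fun φ : FullShift G A => φ j h := by
  let (j : J) : TopologicalSpace (A j) := ⊥
  have (j : J) : DiscreteTopology (A j) := ⟨rfl⟩
  have : Continuous fun φ : ∀ j, G → A j => φ j h := continuous_apply_apply j h
  exact (IsLocallyConstant.iff_continuous _).2 this

theorem hasBasis_nhds_fullShift (φ : FullShift G A) :
    (𝓝 φ).HasBasis (fun K : Set (J × G) => K.Finite)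
      fun K => ⋂ k ∈ K, {ψ | ψ k.1 k.2 = φ k.1 k.2} := by
  let (j : J) : TopologicalSpace (A j) := ⊥
  have (j : J) : DiscreteTopology (A j) := ⟨rfl⟩
  have : 𝓝 φ = ⨅ k : J × G, 𝓟 {ψ : FullShift G A | ψ k.1 k.2 = φ k.1 k.2} := by
    rw [iInf_prod]
    refine nhds_pi.trans (iInf_congr fun j => ?_)
    simp only [nhds_pi, nhds_discrete, Filter.pi, comap_iInf, comap_pure, comap_principal]
    rfl
  exact this ▸ hasBasis_iInf_principal_finite _

variable [Group G]

instance : MulAction G (FullShift G A) where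
  smul g φ j h := φ j (h * g)
  one_smul φ := funext fun j => funext fun h => congrArg (φ j) (mul_one h)
  mul_smul g g' φ := funext fun j => funext fun h => congrArg (φ j) (mul_assoc h g g').symm

theorem FullShift.smul_apply (g : G) (φ : FullShift G A) (j : J) (h : G) :
    (g • φ) j h = φ j (h * g) :=
  rfl

instance : ContinuousConstSMul G (FullShift G A) where
  continuous_const_smul g := by
    let (j : J) : TopologicalSpace (A j) := ⊥
    exact continuous_pi fun j => continuous_pi fun h => continuous_apply_apply j (h * g)

end FullShift

section Recurrence

variable {G Z : Type*} [Group G] [MulAction G Z]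

/-- The points of `X` from whose orbit every point, or else its translate by `a`, lies in `U`. -/
def recurrentPart (X : SubMulAction G Z) (U : Set Z) (a : G) : SubMulAction G Z where
  carrier := {z ∈ X | ∀ g : G, g • z ∈ U ∨ (a * g) • z ∈ U}
  smul_mem' h z hz := ⟨X.smul_mem h hz.1, fun g => by
    simpa only [smul_smul, mul_assoc] using hz.2 (g * h)⟩

theorem mem_recurrentPart {X : SubMulAction G Z} {U : Set Z} {a : G} {z : Z} :
    z ∈ recurrentPart X U a ↔ z ∈ X ∧ ∀ g : G, g • z ∈ U ∨ (a * g) • z ∈ U :=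
  Iff.rfl

theorem recurrentPart_le (X : SubMulAction G Z) (U : Set Z) (a : G) : recurrentPart X U a ≤ X :=
  fun _ hz => hz.1

theorem isClosed_recurrentPart [TopologicalSpace Z] [ContinuousConstSMul G Z]
    {X : SubMulAction G Z} (hX : IsClosed (X : Set Z)) {U : Set Z} (hU : IsClosed U) (a : G) :
    IsClosed (recurrentPart X U a : Set Z) := by
  have hsmul (g : G) : IsClosed {z : Z | g • z ∈ U} := hU.preimage (continuous_const_smul g)
  have hcarrier : (recurrentPart X U a : Set Z) =
      (X : Set Z) ∩ ⋂ g : G, {z | g • z ∈ U} ∪ {z | (a * g) • z ∈ U} := by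
    ext
    simp [mem_recurrentPart]
  exact hcarrier ▸ hX.inter (isClosed_iInter fun g => (hsmul g).union (hsmul (a * g)))

theorem isClosed_iInf_subMulAction [TopologicalSpace Z] {ι : Type*} {X : ι → SubMulAction G Z}
    (hX : ∀ i, IsClosed (X i : Set Z)) : IsClosed ((⨅ i, X i : SubMulAction G Z) : Set Z) := by
  convert isClosed_iInter hX
  ext
  simp

instance [TopologicalSpace Z] [ContinuousConstSMul G Z] (X : SubMulAction G Z) :
    ContinuousConstSMul G X :=
  ⟨fun g => (continuous_subtype_val.const_smul g).subtype_mk _⟩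

end Recurrence

section Flexible

variable {I J : Type*} {A : J → Type*}

theorem eventually_mem_letterGroup (h : FreeGroup I) :
    ∀ᶠ F : Finset I in atTop, h ∈ letterGroup (F : Set I) := by
  obtain ⟨B, hB⟩ := exists_finset_subset_closure_image (s := FreeGroup.of) (F := {h}) <| by
    rw [FreeGroup.closure_range_of]; exact Set.subset_univ _
  filter_upwards [eventually_ge_atTop B] with F hF
  exact letterGroup_mono (Finset.coe_subset.2 hF) (hB (by simp))

open Classical in
/-- The configuration obtained from `φ` by composing with `π` the coordinates `j` that involve only
the letters in `F`, where `supp j` is the set of letters involved in `j`. -/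
noncomputable def pull (supp : J → Finset I) (F : Finset I) (π : FreeGroup I → FreeGroup I)
    (φ : FullShift (FreeGroup I) A) : FullShift (FreeGroup I) A :=
  fun j g => if supp j ⊆ F then φ j (π g) else φ j g

variable {supp : J → Finset I}

theorem pull_apply_of_subset {F : Finset I} {j : J} (h : supp j ⊆ F)
    (π : FreeGroup I → FreeGroup I) (φ : FullShift (FreeGroup I) A) (g : FreeGroup I) :
    pull supp F π φ j g = φ j (π g) :=
  if_pos h

theorem pull_apply_of_not_subset {F : Finset I} {j : J} (h : ¬supp j ⊆ F)
    (π : FreeGroup I → FreeGroup I) (φ : FullShift (FreeGroup I) A) (g : FreeGroup I) :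
    pull supp F π φ j g = φ j g :=
  if_neg h

/-- A set `U` of configurations is local if it involves only finitely many letters. This is encoded
by what the construction uses: when `F` contains these letters and `π` is equivariant for the group
they generate, the pullback of `φ` along `π`, seen from `g`, lies in `U` if and only if `φ`, seen
from `π g`, does. -/
def IsLocal (supp : J → Finset I) (U : Set (FullShift (FreeGroup I) A)) : Prop :=
  ∀ᶠ F : Finset I in atTop, ∀ (π : FreeGroup I →[letterGroup (F : Set I)] FreeGroup I) φ g,
    g • pull supp F π φ ∈ U ↔ π g • φ ∈ U

theorem isLocal_cylinder {K : Set (J × FreeGroup I)} (hK : K.Finite) (a : ∀ j, FreeGroup I → A j) :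
    IsLocal supp (⋂ k ∈ K, {ψ : FullShift (FreeGroup I) A | ψ k.1 k.2 = a k.1 k.2}) := by
  filter_upwards [(eventually_all_finite hK).2 fun k _ =>
    (eventually_ge_atTop (supp k.1)).and (eventually_mem_letterGroup k.2)] with F hF π φ g
  have hcoord (k) (hk : k ∈ K) : (g • pull supp F π φ) k.1 k.2 = (π g • φ) k.1 k.2 :=
    (pull_apply_of_subset (hF k hk).1 π φ _).trans
      (congrArg (φ k.1) (map_mul_of_mem π (hF k hk).2 g))
  simp only [Set.mem_iInter]
  exact forall₂_congr fun k hk => (hcoord k hk).congr_left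

theorem exists_isLocal_isClopen {V : Set (FullShift (FreeGroup I) A)}
    {φ : FullShift (FreeGroup I) A} (hV : V ∈ 𝓝 φ) :
    ∃ U, IsClopen U ∧ IsLocal supp U ∧ φ ∈ U ∧ U ⊆ V := by
  obtain ⟨K, hK, hKV⟩ := (hasBasis_nhds_fullShift φ).mem_iff.1 hV
  refine ⟨_, hK.isClopen_biInter fun k _ => ?_, isLocal_cylinder hK φ, by simp, hKV⟩
  exact (isLocallyConstant_apply k.1 k.2).isClopen_fiber _

/-- A subshift is flexible if it is nonempty, closed and stable under pulling back along maps that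
are equivariant for the group of all letters in a large finite set. -/
structure IsFlexible (supp : J → Finset I)
    (X : SubMulAction (FreeGroup I) (FullShift (FreeGroup I) A)) : Prop where
  nonempty : Nonempty X
  isClosed : IsClosed (X : Set (FullShift (FreeGroup I) A))
  eventually_pull_mem : ∀ᶠ F : Finset I in atTop,
    ∀ π : FreeGroup I →[letterGroup (F : Set I)] FreeGroup I, ∀ φ ∈ X, pull supp F π φ ∈ X

variable {X : SubMulAction (FreeGroup I) (FullShift (FreeGroup I) A)}
  {U : Set (FullShift (FreeGroup I) A)} {φ : FullShift (FreeGroup I) A} {L : Set I}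

theorem exists_pull_mem_recurrentPart {F : Finset I}
    (hUF : ∀ (π : FreeGroup I →[letterGroup (F : Set I)] FreeGroup I) φ g,
      g • pull supp F π φ ∈ U ↔ π g • φ ∈ U)
    (hXF : pull supp F (initialPartHom F) φ ∈ X) (hφ : φ ∈ U) {i : I} (hi : i ∉ F) :
    pull supp F (initialPartHom F) φ ∈ recurrentPart X U (FreeGroup.of i) := by
  have pull_mem {g : FreeGroup I} (hg : initialPart (F : Set I) g = 1) :
      g • pull supp F (initialPartHom F) φ ∈ U := by
    refine (hUF _ φ g).2 ?_
    rwa [initialPartHom_apply, hg, one_smul]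
  refine mem_recurrentPart.2 ⟨hXF, fun g => ?_⟩
  exact (initialPart_eq_one_or (Finset.mem_coe.not.2 hi) g).imp pull_mem pull_mem

theorem IsFlexible.exists_recurrentPart (hX : IsFlexible supp X) (hU : IsClosed U)
    (hU_local : IsLocal supp U) (hφX : φ ∈ X) (hφU : φ ∈ U) (hL : L.Infinite) :
    ∃ i ∈ L, IsFlexible supp (recurrentPart X U (FreeGroup.of i)) := by
  obtain ⟨F, hXF, hUF⟩ := (hX.eventually_pull_mem.and hU_local).exists
  obtain ⟨i, hiL, hiF⟩ := hL.exists_notMem_finset F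
  refine ⟨i, hiL, ⟨_, exists_pull_mem_recurrentPart hUF (hXF _ φ hφX) hφU hiF⟩,
    isClosed_recurrentPart hX.isClosed hU _, ?_⟩
  filter_upwards [hX.eventually_pull_mem, hU_local,
    eventually_mem_letterGroup (FreeGroup.of i)] with F hXF hUF hi π φ hφ
  refine mem_recurrentPart.2 ⟨hXF π φ hφ.1, fun g => ?_⟩
  rw [hUF, hUF, map_mul_of_mem π hi]
  exact hφ.2 (π g)

theorem IsFlexible.exists_le_recurrent (hX : IsFlexible supp X) (hU : IsClosed U)
    (hU_local : IsLocal supp U) (hL : L.Infinite) :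
    ∃ X' ≤ X, IsFlexible supp X' ∧
      ∀ φ ∈ X', φ ∈ U → ∀ ψ ∈ X', ∃ γ ∈ letterGroup L, γ • ψ ∈ U := by
  by_cases hXU : ∃ φ ∈ X, φ ∈ U
  · obtain ⟨φ, hφX, hφU⟩ := hXU
    obtain ⟨i, hi, hi_flexible⟩ := hX.exists_recurrentPart hU hU_local hφX hφU hL
    refine ⟨_, recurrentPart_le X U _, hi_flexible, fun _ _ _ ψ hψ => ?_⟩
    obtain h | h := hψ.2 1
    · exact ⟨1, one_mem _, h⟩
    · exact ⟨_, of_mem_letterGroup hi, by rwa [mul_one] at h⟩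
  · exact ⟨X, le_rfl, hX, fun φ hφ hφU => (hXU ⟨φ, hφ, hφU⟩).elim⟩

theorem isMinimal_of_forall_isLocal {H : Subgroup (FreeGroup I)}
    (h : ∀ U : Set (FullShift (FreeGroup I) A), IsClopen U → IsLocal supp U →
      ∀ φ ∈ X, φ ∈ U → ∀ ψ ∈ X, ∃ γ ∈ H, γ • ψ ∈ U) :
    IsMinimal H X := by
  refine ⟨fun ψ => dense_iff_inter_open.2 fun V hV ⟨φ, hφV⟩ => ?_⟩
  obtain ⟨W, hW, rfl⟩ := isOpen_induced_iff.1 hV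
  obtain ⟨U, hU, hU_local, hφU, hUW⟩ := exists_isLocal_isClopen (supp := supp) (hW.mem_nhds hφV)
  obtain ⟨γ, hγ, hγU⟩ := h U hU hU_local φ φ.2 hφU ψ ψ.2
  exact ⟨γ • ψ, hUW hγU, ⟨γ, hγ⟩, rfl⟩

theorem nonempty_iInf_of_antitone [∀ j, Finite (A j)]
    {X : ℕ → SubMulAction (FreeGroup I) (FullShift (FreeGroup I) A)}
    (hX_anti : ∀ n, X (n + 1) ≤ X n) (hX : ∀ n, IsFlexible supp (X n)) :
    Nonempty (⨅ n, X n : SubMulAction (FreeGroup I) (FullShift (FreeGroup I) A)) := by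
  obtain ⟨φ, hφ⟩ := IsCompact.nonempty_iInter_of_sequence_nonempty_isCompact_isClosed
    (fun n => (X n : Set (FullShift (FreeGroup I) A))) hX_anti
    (fun n => Set.nonempty_coe_sort.1 (hX n).nonempty) (hX 0).isClosed.isCompact
    fun n => (hX n).isClosed
  exact ⟨φ, SubMulAction.mem_iInf.2 (Set.mem_iInter.1 hφ)⟩

theorem exists_seq_isClopen_isLocal [Countable I] [Countable J] [∀ j, Finite (A j)]
    (supp : J → Finset I) :
    ∃ U : ℕ → Set (FullShift (FreeGroup I) A), (∀ n, IsClopen (U n) ∧ IsLocal supp (U n)) ∧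
      ∀ V, IsClopen V → IsLocal supp V → ∃ n, U n = V := by
  have : Countable (TopologicalSpace.Clopens (FullShift (FreeGroup I) A)) :=
    TopologicalSpace.Clopens.countable_iff_secondCountable.2 inferInstance
  have : Set.Countable {U : Set (FullShift (FreeGroup I) A) | IsClopen U ∧ IsLocal supp U} :=
    (Set.countable_range fun U : TopologicalSpace.Clopens (FullShift (FreeGroup I) A) =>
      (U : Set (FullShift (FreeGroup I) A))).mono fun U hU => Set.mem_range.2 ⟨⟨U, hU.1⟩, rfl⟩
  obtain ⟨U, hU⟩ := this.exists_eq_range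
    ⟨Set.univ, isClopen_univ, .of_forall fun _ _ _ _ => by simp⟩
  exact ⟨U, fun n => hU.ge ⟨n, rfl⟩, fun V hV hV_local => hU.le ⟨hV, hV_local⟩⟩

theorem IsFlexible.exists_isMinimal [Countable I] [Countable J] [∀ j, Finite (A j)]
    (hX : IsFlexible supp X) (hL : L.Infinite) :
    ∃ Y ≤ X, IsClosed (Y : Set (FullShift (FreeGroup I) A)) ∧ Nonempty Y ∧
      IsMinimal (letterGroup L) Y := by
  obtain ⟨U, hU, exists_eq_U⟩ := exists_seq_isClopen_isLocal (A := A) supp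
  choose! next next_le next_flexible next_recurrent using fun (n : ℕ)
      (X : SubMulAction (FreeGroup I) (FullShift (FreeGroup I) A)) (hX : IsFlexible supp X) =>
    hX.exists_le_recurrent (hU n).1.isClosed (hU n).2 hL
  let stage (n : ℕ) : SubMulAction (FreeGroup I) (FullShift (FreeGroup I) A) := n.rec X next
  have hstage (n : ℕ) : IsFlexible supp (stage n) := by
    induction n with
    | zero => exact hX
    | succ n ih => exact next_flexible n _ ih
  refine ⟨⨅ n, stage n, iInf_le _ 0, isClosed_iInf_subMulAction fun n => (hstage n).isClosed,
    nonempty_iInf_of_antitone (fun n => next_le n _ (hstage n)) hstage,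
    isMinimal_of_forall_isLocal (supp := supp) fun V hV hV_local φ hφ hφV ψ hψ => ?_⟩
  obtain ⟨n, rfl⟩ := exists_eq_U V hV hV_local
  exact next_recurrent n _ (hstage n) φ (SubMulAction.mem_iInf.1 hφ (n + 1)) hφV ψ
    (SubMulAction.mem_iInf.1 hψ (n + 1))

end Flexible

/-! ### The subshift of pointers and colourings -/

section MarkedShift

variable {I : Type*}

theorem IsAlternating.comp {G : Type*} [Group G] {γ : G} {c : G → Bool} (hc : IsAlternating γ c)
    {π : G → G} (hπ : ∀ g, π (γ * g) = γ * π g) : IsAlternating γ (c ∘ π) := fun g => by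
  simpa only [Function.comp_apply, hπ] using hc (π g)

theorem IsPointer.comp {B : Set I} {d : FreeGroup I → Option (B × Bool)} (hd : IsPointer d)
    {π : FreeGroup I → FreeGroup I}
    (hπ : ∀ i ∈ B, ∀ g, π (FreeGroup.of i * g) = FreeGroup.of i * π g) : IsPointer (d ∘ π) :=
  fun i g => by simpa only [Function.comp_apply, hπ i i.2] using hd i (π g)

theorem isClosed_setOf_isAlternating {G Z : Type*} [Group G] [TopologicalSpace Z] (γ : G)
    {c : Z → G → Bool} (hc : ∀ g, IsLocallyConstant fun z => c z g) :
    IsClosed {z | IsAlternating γ (c z)} := by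
  simp only [IsAlternating, Set.ofPred_forall]
  exact isClosed_iInter fun g =>
    isOpen_compl_iff.1 ((hc (γ * g)).prodMk (hc g) {b | b.1 ≠ b.2}ᶜ)

theorem isClosed_setOf_isPointer {Z : Type*} [TopologicalSpace Z] {B : Set I}
    {d : Z → FreeGroup I → Option (B × Bool)} (hd : ∀ g, IsLocallyConstant fun z => d z g) :
    IsClosed {z | IsPointer (d z)} := by
  simp only [IsPointer, Set.ofPred_forall]
  exact isClosed_iInter fun i => isClosed_iInter fun g =>
    ((hd g).isClosed_fiber _).union ((hd (FreeGroup.of i.1 * g)).isClosed_fiber _)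

/-- The full shift whose configurations consist of a candidate pointer for the letters in `B` and a
candidate alternating colouring for `γ` at each index `(B, γ)`. -/
abbrev MarkingShift (I : Type*) : Type _ :=
  FullShift (FreeGroup I) fun j : Finset I × FreeGroup I => Option ((j.1 : Set I) × Bool) × Bool

/-- The subshift of those configurations in `MarkingShift I` which consist of pointers and, for
`γ ≠ 1`, alternating colourings. -/
def markedShift (I : Type*) : SubMulAction (FreeGroup I) (MarkingShift I) where
  carrier := {φ | ∀ j, IsPointer (fun g => (φ j g).1) ∧
    (j.2 ≠ 1 → IsAlternating j.2 fun g => (φ j g).2)}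
  smul_mem' h _ hφ j := ⟨(hφ j).1.comp (π := (· * h)) fun _ _ _ => mul_assoc _ _ _,
    fun hj => ((hφ j).2 hj).comp (π := (· * h)) fun _ => mul_assoc _ _ _⟩

theorem mem_markedShift {φ : MarkingShift I} : φ ∈ markedShift I ↔ ∀ j,
    IsPointer (fun g => (φ j g).1) ∧ (j.2 ≠ 1 → IsAlternating j.2 fun g => (φ j g).2) :=
  Iff.rfl

theorem isLocallyConstant_comp_apply {j : Finset I × FreeGroup I} {C : Type*}
    (f : Option ((j.1 : Set I) × Bool) × Bool → C) (g : FreeGroup I) :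
    IsLocallyConstant fun φ : MarkingShift I => f (φ j g) :=
  IsLocallyConstant.comp (f := fun φ : MarkingShift I => φ j g) (isLocallyConstant_apply j g) f

theorem isClosed_markedShift : IsClosed (markedShift I : Set (MarkingShift I)) := by
  have hcarrier : (markedShift I : Set (MarkingShift I)) =
      ⋂ j, {φ : MarkingShift I | IsPointer fun g => (φ j g).1} ∩
        ⋂ _ : j.2 ≠ 1, {φ : MarkingShift I | IsAlternating j.2 fun g => (φ j g).2} := by
    ext
    simp only [SetLike.mem_coe, mem_markedShift, Set.mem_iInter, Set.mem_inter_iff,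
      Set.mem_ofPred_eq]
  exact hcarrier ▸ isClosed_iInter fun j =>
    (isClosed_setOf_isPointer (isLocallyConstant_comp_apply Prod.fst)).inter <|
      isClosed_iInter fun _ =>
        isClosed_setOf_isAlternating _ (isLocallyConstant_comp_apply Prod.snd)

theorem nonempty_markedShift : Nonempty (markedShift I) := by
  choose d hd using fun B : Finset I => exists_isPointer (B : Set I)
  choose! c hc using fun (γ : FreeGroup I) (hγ : γ ≠ 1) =>
    exists_isAlternating (mt (isOfFinOrder_iff_eq_one γ).1 hγ)
  exact ⟨fun j g => (d j.1 g, c j.2 g), fun j => ⟨hd j.1, hc j.2⟩⟩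

theorem exists_isFlexible_markedShift (I : Type*) :
    ∃ supp : Finset I × FreeGroup I → Finset I, IsFlexible supp (markedShift I) := by
  choose supp subset_supp mem_supp using fun j : Finset I × FreeGroup I =>
    ((eventually_ge_atTop j.1).and (eventually_mem_letterGroup j.2)).exists
  refine ⟨supp, nonempty_markedShift, isClosed_markedShift, .of_forall fun F π φ hφ j => ?_⟩
  by_cases hj : supp j ⊆ F
  · have hpull (g : FreeGroup I) : pull supp F π φ j g = φ j (π g) :=
      pull_apply_of_subset hj π φ g
    simp only [hpull]
    exact ⟨(hφ j).1.comp fun i hi => map_mul_of_mem π <| of_mem_letterGroup <|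
        hj (subset_supp j hi),
      fun hj1 => ((hφ j).2 hj1).comp <| map_mul_of_mem π <|
        letterGroup_mono (Finset.coe_subset.2 hj) (mem_supp j)⟩
  · have hpull (g : FreeGroup I) : pull supp F π φ j g = φ j g :=
      pull_apply_of_not_subset hj π φ g
    simp only [hpull]
    exact hφ j

theorem smul_ne_of_mem_markedShift {φ : MarkingShift I} (hφ : φ ∈ markedShift I) {γ : FreeGroup I}
    (hγ : γ ≠ 1) : γ • φ ≠ φ := by
  intro h
  have hcoord : φ (∅, γ) (γ * 1) = φ (∅, γ) 1 := by
    rw [mul_one]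
    simpa only [FullShift.smul_apply, one_mul] using congrFun (congrFun h (∅, γ)) 1
  exact (hφ (∅, γ)).2 hγ 1 (congrArg Prod.snd hcoord)

theorem isCancelSMul_of_le_markedShift {I : Type*}
    {Y : SubMulAction (FreeGroup I) (MarkingShift I)} (hY : Y ≤ markedShift I) :
    IsCancelSMul (FreeGroup I) Y :=
  isCancelSMul_iff_eq_one_of_smul_eq.2 fun _ y h => by_contra fun hγ =>
    smul_ne_of_mem_markedShift (hY y.2) hγ (congrArg Subtype.val h)

/-- The letter or inverse of a letter that is the value of a pointer, or `1` if there is none. -/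
def pointedLetter {B : Set I} (o : Option (B × Bool)) : FreeGroup I :=
  o.elim 1 fun x => FreeGroup.mk [(x.1.1, x.2)]

theorem IsPointer.pointedLetter_eq_or {B : Set I} {d : FreeGroup I → Option (B × Bool)}
    (hd : IsPointer d) {i : I} (hi : i ∈ B) (g : FreeGroup I) :
    pointedLetter (d g) = FreeGroup.of i ∨
      pointedLetter (d (FreeGroup.of i * g)) = (FreeGroup.of i)⁻¹ :=
  (hd ⟨i, hi⟩ g).imp (fun h => by rw [h]; rfl) (fun h => by rw [h]; rfl)

theorem topologicallyAmenable_of_le_markedShift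
    {Y : SubMulAction (FreeGroup I) (MarkingShift I)} (hY : Y ≤ markedShift I) :
    TopologicallyAmenable fun (γ : FreeGroup I) (y : Y) => γ • y := by
  refine topologicallyAmenable_of_pointers (FreeGroup.closure_range_of I) fun B =>
    ⟨fun y => pointedLetter (y.1 (B, 1) 1).1, ?_, fun i hi y => ?_⟩
  · exact (isLocallyConstant_comp_apply (fun a => pointedLetter a.1) 1).comp_continuous
      continuous_subtype_val
  · have := (hY y.2 (B, 1)).1.pointedLetter_eq_or hi 1
    rwa [mul_one, ← one_mul (FreeGroup.of i)] at this

end MarkedShift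

theorem exists_subshift_homeomorph_cantorSp {I : Type*} [Countable I] {L : Set I}
    (hL : L.Infinite) :
    ∃ Y : SubMulAction (FreeGroup I) (MarkingShift I), Nonempty (Y ≃ₜ CantorSp) ∧
      IsCancelSMul (FreeGroup I) Y ∧
      TopologicallyAmenable (fun (γ : FreeGroup I) (y : Y) => γ • y) ∧
      IsMinimal (letterGroup L) Y := by
  obtain ⟨supp, h_flexible⟩ := exists_isFlexible_markedShift I
  obtain ⟨Y, hY, hY_closed, hY_nonempty, hY_minimal⟩ := h_flexible.exists_isMinimal hL
  have hY_free := isCancelSMul_of_le_markedShift hY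
  have : CompactSpace Y := isCompact_iff_compactSpace.1 hY_closed.isCompact
  have : SecondCountableTopology Y := Topology.IsEmbedding.subtypeVal.secondCountableTopology
  have : Infinite I := Set.infinite_univ_iff.1 (hL.mono (Set.subset_univ L))
  have : Infinite Y := infinite_of_isCancelSMul (FreeGroup I)
  have : ContinuousConstSMul (letterGroup L) Y := ⟨fun γ => continuous_const_smul (γ : FreeGroup I)⟩
  exact ⟨Y, nonempty_homeomorph_cantorSp_of_isMinimal (letterGroup L), hY_free,
    topologicallyAmenable_of_le_markedShift hY, hY_minimal⟩

end CantorAction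

open CantorAction MulAction in
theorem exists_free_amenable_action_minimal_on_GammaS_general {I : Type*} [Countable I] {L : Set I}
    (hL : L.Infinite) :
    ∃ α : FreeGroup I → (CantorSp ≃ₜ CantorSp),
      (∀ γ γ', α (γ * γ') = (α γ').trans (α γ)) ∧
      (∀ γ : FreeGroup I, γ ≠ 1 → ∀ x : CantorSp, (α γ) x ≠ x) ∧
      TopologicallyAmenable (fun γ (x : CantorSp) => (α γ) x) ∧
      (∀ x : CantorSp, Dense {y : CantorSp |
        ∃ γ ∈ Subgroup.closure (FreeGroup.of '' L), (α γ) x = y}) := by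
  obtain ⟨Y, ⟨e⟩, hY_free, hY_amenable, hY_minimal⟩ := exists_subshift_homeomorph_cantorSp hL
  refine ⟨fun γ => (e.symm.trans (Homeomorph.smul γ)).trans e, fun γ γ' => ?_, fun γ hγ x hx => ?_,
    topologicallyAmenable_conj hY_amenable e, fun x => ?_⟩
  · ext1 x
    simp [mul_smul]
  · exact hγ (IsCancelSMul.eq_one_of_smul (e.eq_symm_apply.2 hx))
  · refine (e.surjective.denseRange.dense_image e.continuous
      (dense_orbit (letterGroup L) (e.symm x))).mono ?_
    rintro _ ⟨_, ⟨γ, rfl⟩, rfl⟩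
    exact ⟨γ, γ.2, rfl⟩

/-- Let `Γ` be the free group on the disjoint union `S ⊔ T` of two disjoint
countably infinite sets and `Γ_S ≤ Γ` the subgroup generated by `S`.  There exists an
action of `Γ` on the Cantor space `X` by homeomorphisms which is free, topologically
amenable, and whose restriction to `Γ_S` is minimal (every `Γ_S`-orbit is dense). -/
theorem exists_free_amenable_action_minimal_on_GammaS
    (S T : Type) [Countable S] [Infinite S] [Countable T] [Infinite T] :
    ∃ α : FreeGroup (S ⊕ T) → (CantorSp ≃ₜ CantorSp),
      (∀ γ γ', α (γ * γ') = (α γ').trans (α γ)) ∧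
      (∀ γ : FreeGroup (S ⊕ T), γ ≠ 1 → ∀ x : CantorSp, (α γ) x ≠ x) ∧
      TopologicallyAmenable (fun γ (x : CantorSp) => (α γ) x) ∧
      (∀ x : CantorSp, Dense {y : CantorSp |
        ∃ γ ∈ Subgroup.closure (Set.range fun s : S => FreeGroup.of (Sum.inl s)),
          (α γ) x = y}) := by
  simpa only [← Set.range_comp, Function.comp_def] using
    exists_free_amenable_action_minimal_on_GammaS_general
      (Set.infinite_range_of_injective (Sum.inl_injective (α := S) (β := T)))
end
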